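/- arXiv:math/0410564 — 7 statements merged into one kernel-verified Lean document; each statement's English description precedes it below -/
import Mathlib

section
/- Let a > 0 and let ν : ℝ → ℝ be a convex function with ν(0) ≤ 0. Then inf_{λ > 0} ( λ + a/λ + ν(λ)/λ ) = inf_{0 < λ ≤ √a} ( λ + a/λ + ν(λ)/λ ). In particular, for every λ ≥ √a one has λ + a/λ + ν(λ)/λ ≥ √a + a/√a + ν(√a)/√a. -/
open Real Set

/-- For `a > 0` and `ν : ℝ → ℝ` convex with `ν 0 ≤ 0`,
`inf_{λ>0} (λ + a/λ + ν(λ)/λ) = inf_{0<λ≤√a} (λ + a/λ + ν(λ)/λ)`, and for every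
`λ ≥ √a`, `λ + a/λ + ν(λ)/λ ≥ √a + a/√a + ν(√a)/√a`. -/
theorem stmt1 (a : ℝ) (ha : 0 < a) (ν : ℝ → ℝ)
    (hconv : ConvexOn ℝ Set.univ ν) (h0 : ν 0 ≤ 0) :
    (sInf { x : ℝ | ∃ l : ℝ, 0 < l ∧ x = l + a / l + ν l / l } =
      sInf { x : ℝ | ∃ l : ℝ, 0 < l ∧ l ≤ Real.sqrt a ∧ x = l + a / l + ν l / l }) ∧
    ∀ l : ℝ, Real.sqrt a ≤ l →
      Real.sqrt a + a / Real.sqrt a + ν (Real.sqrt a) / Real.sqrt a ≤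
        l + a / l + ν l / l := by
  have hs : 0 < Real.sqrt a := Real.sqrt_pos.2 ha
  have hsq : Real.sqrt a * Real.sqrt a = a := Real.mul_self_sqrt ha.le
  have key : ∀ l : ℝ, Real.sqrt a ≤ l →
      Real.sqrt a + a / Real.sqrt a + ν (Real.sqrt a) / Real.sqrt a ≤
        l + a / l + ν l / l := by
    intro l hl
    generalize Real.sqrt a = s at *
    have hl0 : 0 < l := lt_of_lt_of_le hs hl
    have hr1 : s / l ≤ 1 := (div_le_one hl0).2 hl
    have hr0 : 0 < s / l := div_pos hs hl0
    have hc := hconv.2 (mem_univ l) (mem_univ 0) hr0.le (sub_nonneg.2 hr1)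
      (by ring : s / l + (1 - s / l) = 1)
    simp only [smul_eq_mul, mul_zero, add_zero] at hc
    rw [div_mul_cancel₀ s hl0.ne'] at hc
    have h1 : ν s ≤ s / l * ν l := by
      have := mul_nonpos_of_nonneg_of_nonpos (sub_nonneg.2 hr1) h0
      linarith
    have h2 : ν s / s ≤ ν l / l := by
      rw [div_le_iff₀ hs]
      calc ν s ≤ s / l * ν l := h1
        _ = ν l / l * s := by ring
    have h3 : s + a / s ≤ l + a / l := by
      have e1 : a / s = s := by rw [← hsq]; field_simp
      have e2 : l + a / l - (s + s) = (l - s) ^ 2 / l := by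
        rw [← hsq]; field_simp; ring
      have e3 : 0 ≤ (l - s) ^ 2 / l := by positivity
      rw [e1]; linarith
    linarith
  refine ⟨?_, key⟩
  set S := { x : ℝ | ∃ l : ℝ, 0 < l ∧ x = l + a / l + ν l / l } with hS
  set T := { x : ℝ | ∃ l : ℝ, 0 < l ∧ l ≤ Real.sqrt a ∧ x = l + a / l + ν l / l } with hT
  have hTS : T ⊆ S := by
    rintro x ⟨l, h, -, e⟩
    exact ⟨l, h, e⟩
  have hTne : T.Nonempty := ⟨_, Real.sqrt a, hs, le_rfl, rfl⟩
  have hlb : lowerBounds S = lowerBounds T := by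
    apply Subset.antisymm (lowerBounds_mono_set hTS)
    rintro b hb x ⟨l, h, rfl⟩
    rcases le_total l (Real.sqrt a) with h' | h'
    · exact hb ⟨l, h, h', rfl⟩
    · exact (hb ⟨Real.sqrt a, hs, le_rfl, rfl⟩).trans (key l h')
  by_cases hb : BddBelow S
  · have hg : IsGLB S (sInf S) := isGLB_csInf (hTne.mono hTS) hb
    have hg' : IsGLB T (sInf S) := by
      unfold IsGLB at hg ⊢
      rwa [← hlb]
    exact (hg'.csInf_eq hTne).symm
  · have hb' : ¬ BddBelow T := by
      unfold BddBelow at hb ⊢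
      rwa [← hlb]
    rw [Real.sInf_of_not_bddBelow hb, Real.sInf_of_not_bddBelow hb']
end

section
/- Let a > 0 and let ρ : ℝ → ℝ be convex with ρ(0) = a. If there exists λ₂ > 0 such that ρ(λ₂) = −λ₂², then there exists λ₁ ∈ (0, √a] such that ρ(λ₁) = −λ₁². -/
open Real Set

/-- If `a > 0`, `ρ : ℝ → ℝ` is convex with `ρ 0 = a`, and
`ρ λ₂ = −λ₂²` for some `λ₂ > 0`, then `ρ λ₁ = −λ₁²` for some `λ₁ ∈ (0, √a]`. -/
theorem stmt2 (a : ℝ) (ha : 0 < a) (ρ : ℝ → ℝ)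
    (hconv : ConvexOn ℝ Set.univ ρ) (h0 : ρ 0 = a)
    (hex : ∃ l₂ : ℝ, 0 < l₂ ∧ ρ l₂ = -l₂ ^ 2) :
    ∃ l₁ : ℝ, 0 < l₁ ∧ l₁ ≤ Real.sqrt a ∧ ρ l₁ = -l₁ ^ 2 := by
  obtain ⟨l, hl, hρ⟩ := hex
  by_cases hle : l ≤ Real.sqrt a
  · exact ⟨l, hl, hle, hρ⟩
  have hlt : Real.sqrt a < l := not_le.mp hle
  have hs : 0 < Real.sqrt a := Real.sqrt_pos.mpr ha
  have hsq : Real.sqrt a ^ 2 = a := Real.sq_sqrt ha.le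
  set s := Real.sqrt a with hsdef
  have hcont : Continuous ρ := by
    rw [← continuousOn_univ]
    exact hconv.continuousOn isOpen_univ
  have hc := hconv.2 (mem_univ (0 : ℝ)) (mem_univ l)
    (show 0 ≤ 1 - s / l by
      have : s / l ≤ 1 := (div_le_one hl).mpr hlt.le
      linarith) (show 0 ≤ s / l by positivity) (by ring)
  have hpt : (1 - s / l) • (0 : ℝ) + (s / l) • l = s := by
    simp only [smul_eq_mul]
    field_simp
    ring
  rw [hpt, h0, hρ, ← hsq] at hc
  simp only [smul_eq_mul] at hc
  have hkey : (1 - s / l) * s ^ 2 + s / l * -l ^ 2 + s ^ 2 = -(s * (s - l) ^ 2 / l) := by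
    field_simp
    ring
  have hnn : 0 ≤ s * (s - l) ^ 2 / l := by positivity
  have hend : ρ s + s ^ 2 ≤ 0 := by linarith
  have hg : ContinuousOn (fun x => ρ x + x ^ 2) (Icc 0 s) := by fun_prop
  have hmem : (0 : ℝ) ∈ Icc (ρ s + s ^ 2) (ρ 0 + 0 ^ 2) := by
    refine ⟨hend, ?_⟩
    rw [h0]
    linarith [ha]
  obtain ⟨x, hx, hx0⟩ := intermediate_value_Icc' hs.le hg hmem
  have hx0' : ρ x + x ^ 2 = 0 := hx0
  refine ⟨x, lt_of_le_of_ne hx.1 ?_, hx.2, by linarith⟩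
  intro h
  rw [← h, h0] at hx0'
  linarith
end

section
/- (Small-amplitude quadratic enhancement, deterministic case.) Let b : [0,L] → ℝ be continuous with ∫₀ᴸ b(y) dy = 0, and set k := (1/L)∫₀ᴸ ( ∫₀ˣ b(s) ds )² dx. Then there exist constants C > 0 and δ₀ > 0 such that for all δ ∈ (0, δ₀): | c*(δ·b) − c₀ − (c₀ δ²/2)·k | ≤ C δ³. In other words, c*(δ b) = c₀ + (c₀ δ²/2)(1/L)∫₀ᴸ χ'(x)² dx + O(δ³), where χ solves χ'' = −b with χ'(0) = χ'(L) = 0. -/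
open Real Set MeasureTheory intervalIntegral

/-- The principal Neumann eigenvalue `μ_b(λ)` of
`ψ'' + (λ² + λ b(y) + a) ψ = μ ψ` on `(0, L)`, defined through the Rayleigh
quotient variational characterization
`μ_b(λ) = sup { ∫₀ᴸ (−ψ'² + (λ² + λ b + a) ψ²) / ∫₀ᴸ ψ² : ψ ∈ H¹((0,L)), ψ ≠ 0 }`. -/
noncomputable def mu (L a : ℝ) (b : ℝ → ℝ) (l : ℝ) : ℝ :=
  sSup { m : ℝ | ∃ ψ : ℝ → ℝ, ContDiffOn ℝ 1 ψ (Icc 0 L) ∧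
    (∃ y ∈ Icc (0 : ℝ) L, ψ y ≠ 0) ∧
    m = (∫ y in (0 : ℝ)..L, (-(deriv ψ y) ^ 2 + (l ^ 2 + l * b y + a) * (ψ y) ^ 2)) /
        (∫ y in (0 : ℝ)..L, (ψ y) ^ 2) }

/-- The KPP minimal front speed `c*(b) = inf_{λ>0} μ_b(λ)/λ`. -/
noncomputable def cstar (L a : ℝ) (b : ℝ → ℝ) : ℝ :=
  sInf { v : ℝ | ∃ l : ℝ, 0 < l ∧ v = mu L a b l / l }

lemma kpp_den_pos (L : ℝ) (hL : 0 < L) (ψ : ℝ → ℝ) (hψ : ContinuousOn ψ (Icc 0 L))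
    (hne : ∃ y ∈ Icc (0 : ℝ) L, ψ y ≠ 0) : 0 < ∫ y in (0 : ℝ)..L, (ψ y) ^ 2 := by
  obtain ⟨y, hy, hy0⟩ := hne
  apply intervalIntegral.integral_pos hL (hψ.pow 2) (fun x _ => sq_nonneg _)
  exact ⟨y, hy, (sq_pos_iff.2 hy0)⟩

lemma kpp_zero (L : ℝ) (hL : 0 < L) (w w' ψ φ : ℝ → ℝ)
    (hw : ∀ x, HasDerivAt w (w' x) x) (hw' : Continuous w') (h0 : w 0 = 0) (h1 : w L = 0)
    (hψ : ContinuousOn ψ (Icc 0 L)) (hφ : ContinuousOn φ (Icc 0 L))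
    (hd : ∀ x ∈ Ioo 0 L, HasDerivAt ψ (φ x) x) :
    IntervalIntegrable (fun y => w' y * ψ y ^ 2 + w y * (2 * ψ y * φ y)) volume 0 L ∧
    ∫ y in (0 : ℝ)..L, (w' y * ψ y ^ 2 + w y * (2 * ψ y * φ y)) = 0 := by
  have hwc : Continuous w := continuous_iff_continuousAt.2 fun x => (hw x).continuousAt
  have hint : IntervalIntegrable (fun y => w' y * ψ y ^ 2 + w y * (2 * ψ y * φ y)) volume 0 L := by
    apply ContinuousOn.intervalIntegrable_of_Icc hL.le
    have := hw'.continuousOn (s := Icc 0 L)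
    have := hwc.continuousOn (s := Icc 0 L)
    fun_prop
  refine ⟨hint, ?_⟩
  rw [intervalIntegral.integral_eq_sub_of_hasDerivAt_of_le hL.le
    (f := fun y => w y * ψ y ^ 2) _ _ hint]
  · simp [h0, h1]
  · have := hwc.continuousOn (s := Icc 0 L)
    fun_prop
  · intro x hx
    convert (hw x).mul ((hd x hx).pow 2) using 1
    all_goals first | rfl | simp

lemma kpp_upper (L : ℝ) (hL : 0 < L) (V w w' ψ : ℝ → ℝ) (K : ℝ) (hV : Continuous V)
    (hw : ∀ x, HasDerivAt w (w' x) x) (hw' : Continuous w') (h0 : w 0 = 0) (h1 : w L = 0)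
    (hK : ∀ x ∈ Icc 0 L, w x ^ 2 + V x - w' x ≤ K)
    (hψ : ContDiffOn ℝ 1 ψ (Icc 0 L)) (hne : ∃ y ∈ Icc (0 : ℝ) L, ψ y ≠ 0) :
    (∫ y in (0 : ℝ)..L, (-(deriv ψ y) ^ 2 + V y * (ψ y) ^ 2)) /
        (∫ y in (0 : ℝ)..L, (ψ y) ^ 2) ≤ K := by
  have hψc := hψ.continuousOn
  rw [div_le_iff₀ (kpp_den_pos L hL ψ hψc hne)]
  set φ := derivWithin ψ (Icc 0 L) with hφdef
  have hφ : ContinuousOn φ (Icc 0 L) :=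
    hψ.continuousOn_derivWithin (uniqueDiffOn_Icc hL) le_rfl
  have hd : ∀ x ∈ Ioo 0 L, HasDerivAt ψ (φ x) x := by
    intro x hx
    have h := (hψ.differentiableOn (by norm_num)) x (Ioo_subset_Icc_self hx)
    exact h.hasDerivWithinAt.hasDerivAt (Icc_mem_nhds hx.1 hx.2)
  obtain ⟨hint, hz⟩ := kpp_zero L hL w w' ψ φ hw hw' h0 h1 hψc hφ hd
  have hVc := hV.continuousOn (s := Icc 0 L)
  have e1 : (∫ y in (0 : ℝ)..L, (-(deriv ψ y) ^ 2 + V y * (ψ y) ^ 2)) =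
      ∫ y in (0 : ℝ)..L, (-(φ y) ^ 2 + V y * (ψ y) ^ 2) := by
    rw [intervalIntegral.integral_of_le hL.le, intervalIntegral.integral_of_le hL.le,
      integral_Ioc_eq_integral_Ioo, integral_Ioc_eq_integral_Ioo]
    apply setIntegral_congr_fun measurableSet_Ioo
    intro x hx
    simp only [(hd x hx).deriv]
  have i1 : IntervalIntegrable (fun y => K * ψ y ^ 2) volume 0 L := by
    apply ContinuousOn.intervalIntegrable_of_Icc hL.le
    fun_prop
  have i2 : IntervalIntegrable (fun y => -(φ y) ^ 2 + V y * (ψ y) ^ 2) volume 0 L := by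
    apply ContinuousOn.intervalIntegrable_of_Icc hL.le
    fun_prop
  have e2 : K * ∫ y in (0 : ℝ)..L, (ψ y) ^ 2 = ∫ y in (0 : ℝ)..L, (K * ψ y ^ 2 +
      (w' y * ψ y ^ 2 + w y * (2 * ψ y * φ y))) := by
    rw [intervalIntegral.integral_add i1 hint, hz, intervalIntegral.integral_const_mul, add_zero]
  rw [e1, e2]
  apply intervalIntegral.integral_mono_on hL.le i2 (i1.add hint)
  intro x hx
  have := hK x hx
  nlinarith [sq_nonneg (φ x + w x * ψ x), mul_le_mul_of_nonneg_right this (sq_nonneg (ψ x))]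

lemma kpp_lower (L : ℝ) (hL : 0 < L) (V w w' : ℝ → ℝ) (K : ℝ) (hV : Continuous V)
    (hw : ∀ x, HasDerivAt w (w' x) x) (hw' : Continuous w') (h0 : w 0 = 0) (h1 : w L = 0)
    (hK : ∀ x ∈ Icc 0 L, K ≤ w x ^ 2 + V x - w' x) :
    ∃ ψ : ℝ → ℝ, ContDiffOn ℝ 1 ψ (Icc 0 L) ∧ (∃ y ∈ Icc (0 : ℝ) L, ψ y ≠ 0) ∧
    K ≤ (∫ y in (0 : ℝ)..L, (-(deriv ψ y) ^ 2 + V y * (ψ y) ^ 2)) /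
        (∫ y in (0 : ℝ)..L, (ψ y) ^ 2) := by
  have hwc : Continuous w := continuous_iff_continuousAt.2 fun x => (hw x).continuousAt
  let ψ : ℝ → ℝ := fun x => exp (-∫ s in (0:ℝ)..x, w s)
  have hd : ∀ x, HasDerivAt ψ (-w x * ψ x) x := by
    intro x
    have := ((hwc.integral_hasStrictDerivAt 0 x).hasDerivAt.neg).exp
    rw [mul_comm]
    exact this
  have hψc : Continuous ψ := continuous_iff_continuousAt.2 fun x => (hd x).continuousAt
  have hder : deriv ψ = fun x => -w x * ψ x := funext fun x => (hd x).deriv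
  have hne : ∃ y ∈ Icc (0 : ℝ) L, ψ y ≠ 0 := ⟨0, ⟨le_rfl, hL.le⟩, (exp_pos _).ne'⟩
  refine ⟨ψ, ?_, hne, ?_⟩
  · apply ContDiff.contDiffOn
    rw [contDiff_one_iff_deriv]
    refine ⟨fun x => (hd x).differentiableAt, ?_⟩
    rw [hder]
    fun_prop
  rw [le_div_iff₀ (kpp_den_pos L hL ψ hψc.continuousOn hne)]
  have hφ : Continuous (fun x => -w x * ψ x) := by fun_prop
  obtain ⟨hint, hz⟩ := kpp_zero L hL w w' ψ _ hw hw' h0 h1 hψc.continuousOn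
    hφ.continuousOn (fun x _ => hd x)
  have i1 : IntervalIntegrable (fun y => K * ψ y ^ 2) volume 0 L := by
    apply Continuous.intervalIntegrable
    fun_prop
  have i2 : IntervalIntegrable (fun y => -(-w y * ψ y) ^ 2 + V y * (ψ y) ^ 2) volume 0 L := by
    apply Continuous.intervalIntegrable
    fun_prop
  have e2 : K * ∫ y in (0 : ℝ)..L, (ψ y) ^ 2 = ∫ y in (0 : ℝ)..L, (K * ψ y ^ 2 +
      (w' y * ψ y ^ 2 + w y * (2 * ψ y * (-w y * ψ y)))) := by
    rw [intervalIntegral.integral_add i1 hint, hz, intervalIntegral.integral_const_mul, add_zero]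
  rw [hder, e2]
  apply intervalIntegral.integral_mono_on hL.le (i1.add hint) i2
  intro x hx
  have := hK x hx
  nlinarith [mul_le_mul_of_nonneg_right this (sq_nonneg (ψ x))]

lemma kpp_mu (L a : ℝ) (hL : 0 < L) (b : ℝ → ℝ) (hb : Continuous b)
    (hmean : (∫ y in (0 : ℝ)..L, b y) = 0) (k : ℝ)
    (hk : k = (1 / L) * ∫ x in (0 : ℝ)..L, (∫ s in (0 : ℝ)..x, b s) ^ 2) :
    ∃ C > 0, ∀ δ l : ℝ, 0 < δ → 0 < l →
      |mu L a (fun y => δ * b y) l - (l ^ 2 + a + (l * δ) ^ 2 * k)|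
        ≤ C * ((l * δ) ^ 3 + (l * δ) ^ 4) := by
  let B : ℝ → ℝ := fun x => ∫ s in (0 : ℝ)..x, b s
  have hB : ∀ x, HasDerivAt B (b x) x := fun x => (hb.integral_hasStrictDerivAt 0 x).hasDerivAt
  have hBc : Continuous B := continuous_iff_continuousAt.2 fun x => (hB x).continuousAt
  let W : ℝ → ℝ := fun x => ∫ s in (0 : ℝ)..x, (B s ^ 2 - k)
  have hgc : Continuous (fun s => B s ^ 2 - k) := by fun_prop
  have hW : ∀ x, HasDerivAt W (B x ^ 2 - k) x :=
    fun x => (hgc.integral_hasStrictDerivAt 0 x).hasDerivAt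
  have hWc : Continuous W := continuous_iff_continuousAt.2 fun x => (hW x).continuousAt
  have hW0 : W 0 = 0 := by simp [W]
  have hB0 : B 0 = 0 := by simp [B]
  have hBL : B L = 0 := hmean
  have hWL : W L = 0 := by
    simp only [W]
    rw [intervalIntegral.integral_sub (Continuous.intervalIntegrable (by fun_prop) _ _) (by simp)]
    rw [hk]
    simp only [B, intervalIntegral.integral_const, smul_eq_mul]
    field_simp
    ring
  obtain ⟨M, hM⟩ := isCompact_Icc.exists_bound_of_continuousOn (s := Icc 0 L)
    (f := fun x => |2 * B x * W x| + W x ^ 2) (by fun_prop)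
  have hM0 : 0 ≤ M := le_trans (norm_nonneg _) (hM 0 ⟨le_rfl, hL.le⟩)
  refine ⟨M + 1, by linarith, ?_⟩
  intro δ l hδ hl
  set e := l * δ with he
  have hepos : 0 < e := by positivity
  have key : ∀ x ∈ Icc 0 L, |e ^ 3 * (2 * B x * W x) + e ^ 4 * W x ^ 2| ≤
      (M + 1) * (e ^ 3 + e ^ 4) := by
    intro x hx
    have h := hM x hx
    rw [Real.norm_of_nonneg (by positivity)] at h
    have ha1 : |2 * B x * W x| ≤ M + 1 := by nlinarith [sq_nonneg (W x)]
    have ha2 : W x ^ 2 ≤ M + 1 := by nlinarith [abs_nonneg (2 * B x * W x)]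
    calc _ ≤ |e ^ 3 * (2 * B x * W x)| + |e ^ 4 * W x ^ 2| := abs_add_le _ _
      _ = e ^ 3 * |2 * B x * W x| + e ^ 4 * W x ^ 2 := by
        rw [abs_mul, abs_of_pos (pow_pos hepos 3),
          abs_of_nonneg (mul_nonneg (pow_pos hepos 4).le (sq_nonneg (W x)))]
      _ ≤ e ^ 3 * (M + 1) + e ^ 4 * (M + 1) := by gcongr
      _ = _ := by ring
  let w : ℝ → ℝ := fun x => e * B x + e ^ 2 * W x
  let w' : ℝ → ℝ := fun x => e * b x + e ^ 2 * (B x ^ 2 - k)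
  let V : ℝ → ℝ := fun y => l ^ 2 + l * (δ * b y) + a
  have hV : Continuous V := by fun_prop
  have hw : ∀ x, HasDerivAt w (w' x) x := fun x =>
    ((hB x).const_mul e).add ((hW x).const_mul (e ^ 2))
  have hw' : Continuous w' := by fun_prop
  have h0 : w 0 = 0 := by simp [w, hB0, hW0]
  have h1 : w L = 0 := by simp [w, hBL, hWL]
  have hid : ∀ x, w x ^ 2 + V x - w' x = l ^ 2 + a + e ^ 2 * k +
      (e ^ 3 * (2 * B x * W x) + e ^ 4 * W x ^ 2) := by
    intro x
    simp only [w, w', V, he]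
    ring
  have hup : ∀ x ∈ Icc 0 L, w x ^ 2 + V x - w' x ≤
      l ^ 2 + a + e ^ 2 * k + (M + 1) * (e ^ 3 + e ^ 4) := by
    intro x hx
    rw [hid]
    linarith [(abs_le.1 (key x hx)).2]
  have hlo : ∀ x ∈ Icc 0 L, l ^ 2 + a + e ^ 2 * k - (M + 1) * (e ^ 3 + e ^ 4) ≤
      w x ^ 2 + V x - w' x := by
    intro x hx
    rw [hid]
    linarith [(abs_le.1 (key x hx)).1]
  obtain ⟨ψ, hψ, hne, hle⟩ := kpp_lower L hL V w w' _ hV hw hw' h0 h1 hlo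
  have hub : ∀ m ∈ { m : ℝ | ∃ ψ : ℝ → ℝ, ContDiffOn ℝ 1 ψ (Icc 0 L) ∧
    (∃ y ∈ Icc (0 : ℝ) L, ψ y ≠ 0) ∧
    m = (∫ y in (0 : ℝ)..L, (-(deriv ψ y) ^ 2 + (l ^ 2 + l * (δ * b y) + a) * (ψ y) ^ 2)) /
        (∫ y in (0 : ℝ)..L, (ψ y) ^ 2) },
      m ≤ l ^ 2 + a + e ^ 2 * k + (M + 1) * (e ^ 3 + e ^ 4) := by
    rintro m ⟨ψ, hψ, hne, rfl⟩
    exact kpp_upper L hL V w w' ψ _ hV hw hw' h0 h1 hup hψ hne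
  have g1 : mu L a (fun y => δ * b y) l ≤ l ^ 2 + a + e ^ 2 * k + (M + 1) * (e ^ 3 + e ^ 4) :=
    csSup_le ⟨_, ψ, hψ, hne, rfl⟩ hub
  have g2 : l ^ 2 + a + e ^ 2 * k - (M + 1) * (e ^ 3 + e ^ 4) ≤ mu L a (fun y => δ * b y) l :=
    hle.trans (le_csSup ⟨_, hub⟩ ⟨ψ, hψ, hne, rfl⟩)
  rw [abs_le]
  constructor <;> linarith

lemma kpp_mu_ge (L a : ℝ) (hL : 0 < L) (b : ℝ → ℝ) (hb : Continuous b)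
    (hmean : (∫ y in (0 : ℝ)..L, b y) = 0) (δ l : ℝ) :
    l ^ 2 + a ≤ mu L a (fun y => δ * b y) l := by
  obtain ⟨M, hM⟩ := isCompact_Icc.exists_bound_of_continuousOn (s := Icc 0 L)
    (f := fun y => l ^ 2 + l * (δ * b y) + a) (by fun_prop)
  apply le_csSup
  · refine ⟨M, ?_⟩
    rintro m ⟨ψ, hψ, hne, rfl⟩
    refine kpp_upper L hL (fun y => l ^ 2 + l * (δ * b y) + a) (fun _ => 0) (fun _ => 0) ψ M
      (by fun_prop) (fun x => hasDerivAt_const x 0) continuous_const rfl rfl ?_ hψ hne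
    intro x hx
    have := (le_abs_self _).trans (hM x hx)
    simpa using this
  · refine ⟨fun _ => 1, contDiffOn_const, ⟨0, ⟨le_rfl, hL.le⟩, one_ne_zero⟩, ?_⟩
    have : ∫ y in (0:ℝ)..L, (l ^ 2 + l * (δ * b y) + a) = L * (l ^ 2 + a) := by
      have h : ∀ y, l ^ 2 + l * (δ * b y) + a = (l ^ 2 + a) + (l * δ) * b y := fun y => by ring
      simp only [h]
      rw [intervalIntegral.integral_add (by simp) ((hb.const_mul _).intervalIntegrable _ _),
        intervalIntegral.integral_const_mul, hmean]
      simp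
      ring
    simp [this]
    field_simp

lemma kpp_main (L a : ℝ) (hL : 0 < L) (ha : 0 < a) (b : ℝ → ℝ) (hb : Continuous b)
    (hmean : (∫ y in (0 : ℝ)..L, b y) = 0) (k : ℝ)
    (hk : k = (1 / L) * ∫ x in (0 : ℝ)..L, (∫ s in (0 : ℝ)..x, b s) ^ 2) :
    ∃ C > (0 : ℝ), ∃ δ₀ > (0 : ℝ), ∀ δ : ℝ, 0 < δ → δ < δ₀ →
      |cstar L a (fun y => δ * b y) - 2 * Real.sqrt a -
          (2 * Real.sqrt a * δ ^ 2 / 2) * k| ≤ C * δ ^ 3 := by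
  obtain ⟨C, hC, H⟩ := kpp_mu L a hL b hb hmean k hk
  have hk0 : 0 ≤ k := by
    rw [hk]
    have := intervalIntegral.integral_nonneg (f := fun x => (∫ s in (0 : ℝ)..x, b s) ^ 2)
      (μ := volume) hL.le (fun x _ => sq_nonneg _)
    positivity
  set s := Real.sqrt a with hs
  have hs0 : 0 < s := Real.sqrt_pos.2 ha
  have hsa : s ^ 2 = a := Real.sq_sqrt ha.le
  let D := C * ((4 * s) ^ 2 + (4 * s) ^ 3) + k ^ 2 * s
  have hD : 0 < D := by positivity
  refine ⟨D, hD, 1 / (1 + k), by positivity, ?_⟩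
  intro δ hδ hδ1
  have hδk : δ * (1 + k) < 1 := (lt_div_iff₀ (by positivity)).1 hδ1
  have hδ1' : δ < 1 := by nlinarith [mul_nonneg hδ.le hk0]
  have hδkk : δ ^ 2 * k ≤ 1 := by nlinarith [mul_nonneg hδ.le hk0]
  have hδ4 : δ ^ 4 ≤ δ ^ 3 := pow_le_pow_of_le_one hδ.le hδ1'.le (by norm_num)
  have hδ3 : 0 < δ ^ 3 := by positivity
  -- lower bound for every `l`
  have hlow : ∀ v ∈ { v : ℝ | ∃ l : ℝ, 0 < l ∧ v = mu L a (fun y => δ * b y) l / l },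
      2 * s + s * δ ^ 2 * k - D * δ ^ 3 ≤ v := by
    rintro v ⟨l, hl, rfl⟩
    rw [le_div_iff₀ hl]
    by_cases h4 : l ≤ 4 * s
    · have h := (abs_le.1 (H δ l hδ hl)).1
      have e1 : C * ((l * δ) ^ 3 + (l * δ) ^ 4) ≤ C * ((4 * s) ^ 2 + (4 * s) ^ 3) * δ ^ 3 * l := by
        have : C * ((l * δ) ^ 3 + (l * δ) ^ 4) = C * (l ^ 2 * δ ^ 3 + l ^ 3 * δ ^ 4) * l := by ring
        rw [this]
        have : C * (l ^ 2 * δ ^ 3 + l ^ 3 * δ ^ 4) ≤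
            C * ((4 * s) ^ 2 * δ ^ 3 + (4 * s) ^ 3 * δ ^ 3) := by gcongr
        nlinarith
      have e2 : (2 * s + s * δ ^ 2 * k - k ^ 2 * s * δ ^ 3) * l ≤ l ^ 2 + a + (l * δ) ^ 2 * k := by
        have q1 : 0 ≤ ((l - s) + δ ^ 2 * k * l / 2) ^ 2 := sq_nonneg _
        have q2 : δ ^ 4 * k ^ 2 * l ^ 2 / 4 ≤ k ^ 2 * s * δ ^ 3 * l := by
          calc δ ^ 4 * k ^ 2 * l ^ 2 / 4 = δ ^ 4 * k ^ 2 * l * l / 4 := by ring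
            _ ≤ δ ^ 3 * k ^ 2 * l * (4 * s) / 4 := by gcongr
            _ = _ := by ring
        rw [← hsa]
        nlinarith
      have : (2 * s + s * δ ^ 2 * k - D * δ ^ 3) * l =
        (2 * s + s * δ ^ 2 * k - k ^ 2 * s * δ ^ 3) * l
          - C * ((4 * s) ^ 2 + (4 * s) ^ 3) * δ ^ 3 * l := by simp only [D]; ring
      linarith
    · have h := kpp_mu_ge L a hL b hb hmean δ l
      push Not at h4
      have : 2 * s + s * δ ^ 2 * k - D * δ ^ 3 ≤ l := by
        nlinarith [mul_pos hD hδ3, mul_le_mul_of_nonneg_left hδkk hs0.le]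
      nlinarith [mul_le_mul_of_nonneg_right this hl.le]
  have g1 : 2 * s + s * δ ^ 2 * k - D * δ ^ 3 ≤ cstar L a (fun y => δ * b y) :=
    le_csInf ⟨_, 1, one_pos, rfl⟩ hlow
  have g2 : cstar L a (fun y => δ * b y) ≤ 2 * s + s * δ ^ 2 * k + D * δ ^ 3 := by
    have : cstar L a (fun y => δ * b y) ≤ mu L a (fun y => δ * b y) s / s :=
      csInf_le ⟨_, hlow⟩ ⟨s, hs0, rfl⟩
    refine this.trans ?_
    rw [div_le_iff₀ hs0]
    have h := (abs_le.1 (H δ s hδ hs0)).2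
    have e1 : C * ((s * δ) ^ 3 + (s * δ) ^ 4) ≤ D * δ ^ 3 * s := by
      calc C * ((s * δ) ^ 3 + (s * δ) ^ 4) = C * (s ^ 2 * δ ^ 3 + s ^ 3 * δ ^ 4) * s := by ring
        _ ≤ C * ((4 * s) ^ 2 * δ ^ 3 + (4 * s) ^ 3 * δ ^ 3) * s := by
          gcongr <;> linarith
        _ = (C * ((4 * s) ^ 2 + (4 * s) ^ 3) + 0) * δ ^ 3 * s := by ring
        _ ≤ D * δ ^ 3 * s := by
          simp only [D]
          gcongr
          positivity
    nlinarith
  rw [abs_le]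
  constructor <;> linarith

lemma kpp_mu_congr (L a : ℝ) (hL : 0 < L) (b b' : ℝ → ℝ) (h : EqOn b b' (Icc 0 L)) (l : ℝ) :
    mu L a b l = mu L a b' l := by
  unfold mu
  congr 1
  ext m
  have : ∀ ψ : ℝ → ℝ,
      (∫ y in (0 : ℝ)..L, (-(deriv ψ y) ^ 2 + (l ^ 2 + l * b y + a) * (ψ y) ^ 2)) =
      ∫ y in (0 : ℝ)..L, (-(deriv ψ y) ^ 2 + (l ^ 2 + l * b' y + a) * (ψ y) ^ 2) := by
    intro ψ
    apply intervalIntegral.integral_congr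
    intro y hy
    rw [uIcc_of_le hL.le] at hy
    simp only [h hy]
  simp only [this]

theorem stmt5 (L a : ℝ) (hL : 0 < L) (ha : 0 < a) (b : ℝ → ℝ)
    (hb : ContinuousOn b (Icc 0 L))
    (hmean : (∫ y in (0 : ℝ)..L, b y) = 0) :
    ∃ C > (0 : ℝ), ∃ δ₀ > (0 : ℝ), ∀ δ : ℝ, 0 < δ → δ < δ₀ →
      |cstar L a (fun y => δ * b y) - 2 * Real.sqrt a -
          (2 * Real.sqrt a * δ ^ 2 / 2) *
            ((1 / L) * ∫ x in (0 : ℝ)..L, (∫ s in (0 : ℝ)..x, b s) ^ 2)| ≤ C * δ ^ 3 := by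
  let b' : ℝ → ℝ := IccExtend hL.le ((Icc 0 L).domRestrict b)
  have hb' : Continuous b' := (continuousOn_iff_continuous_domRestrict.1 hb).Icc_extend'
  have heq : EqOn b b' (Icc 0 L) := by
    intro x hx
    simp only [b', IccExtend_of_mem hL.le _ hx]
    rfl
  have hB : ∀ x ∈ Icc 0 L, (∫ s in (0 : ℝ)..x, b s) = ∫ s in (0 : ℝ)..x, b' s := by
    intro x hx
    apply intervalIntegral.integral_congr
    intro y hy
    rw [uIcc_of_le hx.1] at hy
    exact heq ⟨hy.1, hy.2.trans hx.2⟩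
  have hm' : (∫ y in (0 : ℝ)..L, b' y) = 0 := by rw [← hB L ⟨hL.le, le_rfl⟩, hmean]
  have hk : (∫ x in (0 : ℝ)..L, (∫ s in (0 : ℝ)..x, b s) ^ 2) =
      ∫ x in (0 : ℝ)..L, (∫ s in (0 : ℝ)..x, b' s) ^ 2 := by
    apply intervalIntegral.integral_congr
    intro y hy
    rw [uIcc_of_le hL.le] at hy
    simp only [hB y hy]
  have hc : ∀ δ : ℝ, cstar L a (fun y => δ * b y) = cstar L a (fun y => δ * b' y) := by
    intro δ
    unfold cstar
    have : ∀ l, mu L a (fun y => δ * b y) l = mu L a (fun y => δ * b' y) l := fun l =>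
      kpp_mu_congr L a hL _ _ (fun x hx => by simp only [heq hx]) l
    simp only [this]
  simp only [hc, hk]
  exact kpp_main L a hL ha b' hb' hm' _ rfl
end

section
/- (Averaged quadratic enhancement for random shears.) Let (Ω, ℱ, P) be a probability space and b : Ω × [0,L] → ℝ jointly measurable such that for P-a.e. ω the path y ↦ b(ω,y) is continuous and satisfies ∫₀ᴸ b(ω,y) dy = 0, and such that E[ ‖b(ω,·)‖_∞⁶ ] < ∞, where ‖b(ω,·)‖_∞ = sup_{y∈[0,L]} |b(ω,y)|. Set k(ω) := (1/L)∫₀ᴸ ( ∫₀ˣ b(ω,s) ds )² dx. Then there exist constants C > 0 and δ₀ > 0 such that for all δ ∈ (0, δ₀): | E[ c*(δ·b(ω,·)) ] − c₀ − (c₀ δ²/2)·E[k] | ≤ C δ³. -/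
open Real Set MeasureTheory intervalIntegral

/-- The sup norm `‖b‖_∞ = sup_{y ∈ [0,L]} |b(y)|` of a shear on the cross-section. -/
noncomputable def supNorm (L : ℝ) (b : ℝ → ℝ) : ℝ :=
  sSup ((fun y => |b y|) '' Icc 0 L)

lemma aux_c1 {L : ℝ} (hL : 0 < L) {ψ : ℝ → ℝ} (h : ContDiffOn ℝ 1 ψ (Icc 0 L)) :
    ∃ p : ℝ → ℝ, ContinuousOn p (Icc 0 L) ∧ (∀ x ∈ Ioo 0 L, HasDerivAt ψ (p x) x) ∧
      ∀ V : ℝ → ℝ, (∫ y in (0 : ℝ)..L, (-(deriv ψ y) ^ 2 + V y * (ψ y) ^ 2)) =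
        ∫ y in (0 : ℝ)..L, (-(p y) ^ 2 + V y * (ψ y) ^ 2) := by
  have hd : ∀ x ∈ Ioo 0 L, HasDerivAt ψ (derivWithin ψ (Icc 0 L) x) x := by
    intro x hx
    have h1 : DifferentiableWithinAt ℝ ψ (Icc 0 L) x :=
      (h.differentiableOn (by norm_num)) x (Ioo_subset_Icc_self hx)
    exact h1.hasDerivWithinAt.hasDerivAt (Icc_mem_nhds hx.1 hx.2)
  refine ⟨derivWithin ψ (Icc 0 L),
    h.continuousOn_derivWithin (uniqueDiffOn_Icc hL) le_rfl, hd, ?_⟩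
  intro V
  rw [intervalIntegral.integral_of_le hL.le, intervalIntegral.integral_of_le hL.le,
    MeasureTheory.integral_Ioc_eq_integral_Ioo, MeasureTheory.integral_Ioc_eq_integral_Ioo]
  refine MeasureTheory.setIntegral_congr_fun measurableSet_Ioo ?_
  intro x hx
  simp only [(hd x hx).deriv]

lemma aux_pos {L : ℝ} (hL : 0 < L) {ψ : ℝ → ℝ} (h : ContinuousOn ψ (Icc 0 L))
    (hn : ∃ y ∈ Icc (0 : ℝ) L, ψ y ≠ 0) : 0 < ∫ y in (0 : ℝ)..L, (ψ y) ^ 2 := by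
  obtain ⟨y, hy, hy0⟩ := hn
  exact intervalIntegral.integral_pos hL (h.pow 2) (fun x _ => sq_nonneg _) ⟨y, hy, by positivity⟩

/-- Barta-type upper bound for the Rayleigh quotient. -/
lemma ray_le {L a : ℝ} (hL : 0 < L) {B : ℝ → ℝ} (hB : ContinuousOn B (Icc 0 L)) {l N : ℝ}
    {G G' : ℝ → ℝ} (hG : ∀ x, HasDerivAt G (G' x) x) (hG' : ContinuousOn G' (Icc 0 L))
    (hG0 : G 0 = 0) (hGL : G L = 0)
    (hN : ∀ y ∈ Icc 0 L, G' y + G y ^ 2 + l * B y ≤ N)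
    {ψ : ℝ → ℝ} (h : ContDiffOn ℝ 1 ψ (Icc 0 L)) (hn : ∃ y ∈ Icc (0 : ℝ) L, ψ y ≠ 0) :
    (∫ y in (0 : ℝ)..L, (-(deriv ψ y) ^ 2 + (l ^ 2 + l * B y + a) * (ψ y) ^ 2)) /
        (∫ y in (0 : ℝ)..L, (ψ y) ^ 2) ≤ l ^ 2 + a + N := by
  obtain ⟨p, hp, hd, hV⟩ := aux_c1 hL h
  have hψ := h.continuousOn
  have hGc : ContinuousOn G (Icc 0 L) := fun x _ => (hG x).continuousAt.continuousWithinAt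
  rw [div_le_iff₀ (aux_pos hL hψ hn), hV (fun y => l ^ 2 + l * B y + a)]
  have hu : uIcc 0 L = Icc 0 L := uIcc_of_le hL.le
  have c1 : ContinuousOn (fun y => G' y * ψ y ^ 2 + G y * (2 * ψ y * p y)) (Icc 0 L) := by
    fun_prop
  have hftc : ∫ y in (0 : ℝ)..L, (G' y * ψ y ^ 2 + G y * (2 * ψ y * p y)) = 0 := by
    rw [intervalIntegral.integral_eq_sub_of_hasDerivAt_of_le (f := fun y => G y * ψ y ^ 2) hL.le
      (by fun_prop) _ (ContinuousOn.intervalIntegrable (by rwa [hu]))]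
    · simp [hG0, hGL]
    · intro x hx
      have := (hG x).mul ((hd x hx).pow 2)
      refine this.congr_deriv ?_
      simp
  have c2 : ContinuousOn (fun y => (l ^ 2 + a + N) * ψ y ^ 2) (Icc 0 L) := by fun_prop
  have i1 := ContinuousOn.intervalIntegrable (μ := volume) (hu ▸ c1)
  have i2 := ContinuousOn.intervalIntegrable (μ := volume) (hu ▸ c2)
  calc _ ≤ ∫ y in (0 : ℝ)..L, ((l ^ 2 + a + N) * ψ y ^ 2 -
        (G' y * ψ y ^ 2 + G y * (2 * ψ y * p y))) := by
        refine intervalIntegral.integral_mono_on hL.le ?_ (i2.sub i1) ?_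
        · apply ContinuousOn.intervalIntegrable
          rw [hu]; fun_prop
        · intro y hy
          have := mul_le_mul_of_nonneg_right (hN y hy) (sq_nonneg (ψ y))
          nlinarith [sq_nonneg (p y - G y * ψ y)]
    _ = _ := by
        rw [intervalIntegral.integral_sub i2 i1, hftc, intervalIntegral.integral_const_mul, sub_zero]

lemma mu_bdd {L a : ℝ} (hL : 0 < L) {B : ℝ → ℝ} (hB : ContinuousOn B (Icc 0 L)) (l : ℝ) :
    BddAbove { m : ℝ | ∃ ψ : ℝ → ℝ, ContDiffOn ℝ 1 ψ (Icc 0 L) ∧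
    (∃ y ∈ Icc (0 : ℝ) L, ψ y ≠ 0) ∧
    m = (∫ y in (0 : ℝ)..L, (-(deriv ψ y) ^ 2 + (l ^ 2 + l * B y + a) * (ψ y) ^ 2)) /
        (∫ y in (0 : ℝ)..L, (ψ y) ^ 2) } := by
  obtain ⟨N, hN⟩ := (isCompact_Icc (a := (0:ℝ)) (b := L)).exists_bound_of_continuousOn hB
  refine ⟨l ^ 2 + a + |l| * N, ?_⟩
  rintro m ⟨ψ, h, hn, rfl⟩
  refine ray_le (G := fun _ => 0) (G' := fun _ => 0) hL hB (fun x => hasDerivAt_const _ _)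
    continuousOn_const rfl rfl ?_ h hn
  intro y hy
  have h1 := hN y hy
  rw [Real.norm_eq_abs] at h1
  calc _ = l * B y := by ring
    _ ≤ |l * B y| := le_abs_self _
    _ = |l| * |B y| := abs_mul _ _
    _ ≤ _ := by gcongr

lemma le_mu {L a : ℝ} (hL : 0 < L) {B : ℝ → ℝ} (hB : ContinuousOn B (Icc 0 L)) (l : ℝ)
    {ψ : ℝ → ℝ} (h : ContDiffOn ℝ 1 ψ (Icc 0 L)) (hn : ∃ y ∈ Icc (0 : ℝ) L, ψ y ≠ 0) :
    (∫ y in (0 : ℝ)..L, (-(deriv ψ y) ^ 2 + (l ^ 2 + l * B y + a) * (ψ y) ^ 2)) /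
        (∫ y in (0 : ℝ)..L, (ψ y) ^ 2) ≤ mu L a B l :=
  le_csSup (mu_bdd hL hB l) ⟨ψ, h, hn, rfl⟩

lemma mu_le {L a : ℝ} (hL : 0 < L) {B : ℝ → ℝ} {l N : ℝ}
    (H : ∀ ψ : ℝ → ℝ, ContDiffOn ℝ 1 ψ (Icc 0 L) → (∃ y ∈ Icc (0 : ℝ) L, ψ y ≠ 0) →
    (∫ y in (0 : ℝ)..L, (-(deriv ψ y) ^ 2 + (l ^ 2 + l * B y + a) * (ψ y) ^ 2)) /
        (∫ y in (0 : ℝ)..L, (ψ y) ^ 2) ≤ N) : mu L a B l ≤ N := by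
  refine csSup_le ⟨_, fun _ => 1, contDiffOn_const, ⟨0, ⟨le_rfl, hL.le⟩, one_ne_zero⟩, rfl⟩ ?_
  rintro m ⟨ψ, h, hn, rfl⟩
  exact H ψ h hn

/-- Comparison of eigenvalues. -/
lemma mu_le_add {L a : ℝ} (hL : 0 < L) {B B' : ℝ → ℝ} (hB : ContinuousOn B (Icc 0 L))
    (hB' : ContinuousOn B' (Icc 0 L)) {l e : ℝ} (hl : 0 < l)
    (hBB : ∀ y ∈ Icc 0 L, B y ≤ B' y + e) : mu L a B l ≤ mu L a B' l + l * e := by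
  refine mu_le hL fun ψ h hn => ?_
  refine le_trans ?_ (add_le_add_left (le_mu hL hB' l h hn) _)
  obtain ⟨p, hp, hd, hV⟩ := aux_c1 hL h
  have hψ := h.continuousOn
  have hpos := aux_pos hL hψ hn
  have hu : uIcc 0 L = Icc 0 L := uIcc_of_le hL.le
  rw [div_add' _ _ _ hpos.ne', div_le_div_iff_of_pos_right hpos,
    hV (fun y => l ^ 2 + l * B y + a), hV (fun y => l ^ 2 + l * B' y + a),
    ← intervalIntegral.integral_const_mul, ← intervalIntegral.integral_add]
  · refine intervalIntegral.integral_mono_on hL.le ?_ ?_ ?_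
    · apply ContinuousOn.intervalIntegrable
      rw [hu]; fun_prop
    · apply ContinuousOn.intervalIntegrable
      rw [hu]; fun_prop
    · intro y hy
      have h1 := mul_le_mul_of_nonneg_left (hBB y hy) hl.le
      have := mul_le_mul_of_nonneg_right h1 (sq_nonneg (ψ y))
      nlinarith
  · apply ContinuousOn.intervalIntegrable
    rw [hu]; fun_prop
  · apply ContinuousOn.intervalIntegrable
    rw [hu]; fun_prop

lemma mu_ge_const {L a : ℝ} (hL : 0 < L) {B : ℝ → ℝ} (hB : ContinuousOn B (Icc 0 L)) {l N : ℝ}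
    (hl : 0 < l) (hN : ∀ y ∈ Icc 0 L, -N ≤ B y) : l ^ 2 + a - l * N ≤ mu L a B l := by
  have h0 : l ^ 2 + a ≤ mu L a (fun _ => 0) l := by
    refine le_trans (le_of_eq ?_) (le_mu hL continuousOn_const l (ψ := fun _ => 1)
      contDiffOn_const ⟨0, ⟨le_rfl, hL.le⟩, one_ne_zero⟩)
    simp
    field_simp
  have := mu_le_add (a := a) hL (B := fun _ => 0) continuousOn_const hB hl (e := N)
    (fun y hy => by linarith [hN y hy])
  linarith

lemma cstar_bdd {L a : ℝ} (hL : 0 < L) (ha : 0 < a) {B : ℝ → ℝ}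
    (hB : ContinuousOn B (Icc 0 L)) :
    BddBelow { v : ℝ | ∃ l : ℝ, 0 < l ∧ v = mu L a B l / l } := by
  obtain ⟨N, hN⟩ := (isCompact_Icc (a := (0:ℝ)) (b := L)).exists_bound_of_continuousOn hB
  refine ⟨-N, ?_⟩
  rintro v ⟨l, hl, rfl⟩
  rw [le_div_iff₀ hl]
  have := mu_ge_const (a := a) hL hB hl (N := N) (fun y hy => (abs_le.1 (hN y hy)).1)
  nlinarith

lemma cstar_le {L a : ℝ} (hL : 0 < L) (ha : 0 < a) {B : ℝ → ℝ}
    (hB : ContinuousOn B (Icc 0 L)) {l : ℝ} (hl : 0 < l) : cstar L a B ≤ mu L a B l / l :=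
  csInf_le (cstar_bdd hL ha hB) ⟨l, hl, rfl⟩

lemma le_cstar {L a : ℝ} {B : ℝ → ℝ} {N : ℝ}
    (H : ∀ l, 0 < l → N ≤ mu L a B l / l) : N ≤ cstar L a B := by
  refine le_csInf ⟨_, 1, one_pos, rfl⟩ ?_
  rintro v ⟨l, hl, rfl⟩
  exact H l hl

lemma cstar_le_add {L a : ℝ} (hL : 0 < L) (ha : 0 < a) {B B' : ℝ → ℝ}
    (hB : ContinuousOn B (Icc 0 L))
    (hB' : ContinuousOn B' (Icc 0 L)) {e : ℝ}
    (hBB : ∀ y ∈ Icc 0 L, |B y - B' y| ≤ e) : |cstar L a B - cstar L a B'| ≤ e := by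
  have key : ∀ {B B' : ℝ → ℝ}, ContinuousOn B (Icc 0 L) → ContinuousOn B' (Icc 0 L) →
      (∀ y ∈ Icc 0 L, |B y - B' y| ≤ e) → cstar L a B - e ≤ cstar L a B' := by
    intro B B' hB hB' hBB
    refine le_cstar fun l hl => ?_
    have h1 := cstar_le hL ha hB hl
    have h2 := mu_le_add (a := a) hL hB hB' hl (e := e)
      (fun y hy => by linarith [(abs_le.1 (hBB y hy)).2])
    have h3 : mu L a B l / l ≤ mu L a B' l / l + e := by
      rw [div_add' _ _ _ hl.ne', div_le_div_iff_of_pos_right hl]; linarith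
    linarith
  rw [abs_le]
  have := key hB hB' hBB
  have := key hB' hB (fun y hy => by rw [abs_sub_comm]; exact hBB y hy)
  constructor <;> linarith

lemma cstar_congr {L a : ℝ} (hL : 0 < L) (ha : 0 < a) {B B' : ℝ → ℝ}
    (hB : ContinuousOn B (Icc 0 L))
    (hB' : ContinuousOn B' (Icc 0 L)) 
    (hBB : ∀ y ∈ Icc 0 L, B y = B' y) : cstar L a B = cstar L a B' := by
  have := cstar_le_add hL ha hB hB' (e := 0) (fun y hy => by simp [hBB y hy])
  exact sub_eq_zero.1 (abs_nonpos_iff.1 this)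

lemma prim_hasDerivAt {f : ℝ → ℝ} (hf : Continuous f) (x : ℝ) :
    HasDerivAt (fun x => ∫ s in (0 : ℝ)..x, f s) (f x) x :=
  intervalIntegral.integral_hasDerivAt_right (hf.intervalIntegrable _ _)
    (hf.stronglyMeasurableAtFilter _ _) hf.continuousAt

lemma prim_bound {L N : ℝ} {f : ℝ → ℝ}
    (hN : ∀ y ∈ Icc 0 L, |f y| ≤ N) {x : ℝ} (hx : x ∈ Icc 0 L) :
    |∫ s in (0 : ℝ)..x, f s| ≤ N * L := by
  have hN0 : 0 ≤ N := (abs_nonneg _).trans (hN x hx)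
  have := intervalIntegral.norm_integral_le_of_norm_le_const (a := 0) (b := x) (f := f) (C := N)
    (fun y hy => by
      rw [uIoc_of_le hx.1] at hy
      exact hN y ⟨hy.1.le, hy.2.trans hx.2⟩)
  rw [Real.norm_eq_abs, sub_zero, abs_of_nonneg hx.1] at this
  exact this.trans (mul_le_mul_of_nonneg_left hx.2 hN0)

/-- The enhancement functional. -/
noncomputable def kk (L : ℝ) (B : ℝ → ℝ) : ℝ :=
  (1 / L) * ∫ x in (0 : ℝ)..L, (∫ s in (0 : ℝ)..x, B s) ^ 2

lemma kk_bounds {L : ℝ} (hL : 0 < L) {B : ℝ → ℝ} {M : ℝ}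
    (hM : ∀ y ∈ Icc 0 L, |B y| ≤ M) : 0 ≤ kk L B ∧ kk L B ≤ M ^ 2 * L ^ 2 := by
  have h1 : 0 ≤ ∫ x in (0 : ℝ)..L, (∫ s in (0 : ℝ)..x, B s) ^ 2 :=
    intervalIntegral.integral_nonneg hL.le (fun _ _ => sq_nonneg _)
  have h2 := prim_bound (L := L) (f := fun x => (∫ s in (0 : ℝ)..x, B s) ^ 2) (N := (M * L) ^ 2)
    (fun y hy => by
      rw [abs_of_nonneg (sq_nonneg _), ← sq_abs]
      exact pow_le_pow_left₀ (abs_nonneg _) (prim_bound hM hy) 2) (x := L) ⟨hL.le, le_rfl⟩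
  rw [abs_of_nonneg h1] at h2
  unfold kk
  refine ⟨by positivity, ?_⟩
  rw [one_div, inv_mul_le_iff₀ hL]
  linarith

lemma mu_upper {L a : ℝ} (hL : 0 < L) {B : ℝ → ℝ} (hB : Continuous B) {M : ℝ}
    (hM : ∀ y ∈ Icc 0 L, |B y| ≤ M) (h0 : ∫ y in (0 : ℝ)..L, B y = 0) {l : ℝ} (hl : 0 < l) :
    mu L a B l ≤ l ^ 2 + a + (l ^ 2 * kk L B + 2 * l ^ 3 * (M ^ 3 * L ^ 4)
      + l ^ 4 * (M ^ 4 * L ^ 6)) := by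
  have hM0 : 0 ≤ M := (abs_nonneg _).trans (hM 0 ⟨le_rfl, hL.le⟩)
  obtain ⟨F, hFdef⟩ : ∃ F : ℝ → ℝ, F = fun x => ∫ s in (0 : ℝ)..x, B s := ⟨_, rfl⟩
  have hF : ∀ x, HasDerivAt F (B x) x := fun x => hFdef ▸ prim_hasDerivAt hB x
  have hFc : Continuous F := continuous_iff_continuousAt.2 fun x => (hF x).continuousAt
  have hF2 : Continuous fun x => F x ^ 2 := hFc.pow 2
  have hH := prim_hasDerivAt hF2
  obtain ⟨H, hHdef⟩ : ∃ H : ℝ → ℝ, H = fun x => ∫ s in (0 : ℝ)..x, F s ^ 2 := ⟨_, rfl⟩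
  rw [← hHdef] at hH
  obtain ⟨k, hk⟩ : ∃ k, k = kk L B := ⟨_, rfl⟩
  have hkL : k * L = H L := by
    rw [hk, hHdef, kk, hFdef]; field_simp
  have hFL : F L = 0 := by rw [hFdef]; exact h0
  have hF0 : F 0 = 0 := by rw [hFdef]; simp
  have hH0 : H 0 = 0 := by rw [hHdef]; simp
  have hFb : ∀ y ∈ Icc 0 L, |F y| ≤ M * L := fun y hy => hFdef ▸ prim_bound hM hy
  have hHb : ∀ y ∈ Icc 0 L, 0 ≤ H y ∧ H y ≤ M ^ 2 * L ^ 3 := by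
    intro y hy
    have h2 := prim_bound (L := L) (f := fun x => F x ^ 2) (N := (M * L) ^ 2)
      (fun y hy => by
        rw [abs_of_nonneg (sq_nonneg _), ← sq_abs]
        exact pow_le_pow_left₀ (abs_nonneg _) (hFb y hy) 2) hy
    have h3 : 0 ≤ H y := by
      rw [hHdef]; exact intervalIntegral.integral_nonneg hy.1 (fun _ _ => sq_nonneg _)
    refine ⟨h3, ?_⟩
    have h4 := le_abs_self (H y)
    rw [hHdef] at h4 ⊢
    simp only at h4 h2 ⊢
    linarith
  obtain ⟨hk0, hk1⟩ := kk_bounds hL hM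
  rw [← hk] at hk0 hk1 ⊢
  refine mu_le hL fun ψ h hn => ray_le (G := fun x => l * (-F x + l * (k * x - H x)))
    (G' := fun x => l * (-B x + l * (k * 1 - F x ^ 2))) hL hB.continuousOn ?_ ?_ ?_ ?_ ?_ h hn
  · intro x
    exact (((hF x).neg).add ((((hasDerivAt_id x).const_mul k).sub (hH x)).const_mul l)).const_mul l
  · apply Continuous.continuousOn; fun_prop
  · simp [hF0, hH0]
  · simp [hFL, hkL]
  · intro y hy
    have e1 : |k * y - H y| ≤ M ^ 2 * L ^ 3 := by
      have : k * y ≤ M ^ 2 * L ^ 2 * L := mul_le_mul hk1 hy.2 hy.1 (by positivity)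
      have : 0 ≤ k * y := mul_nonneg hk0 hy.1
      have := hHb y hy
      rw [abs_le]; constructor <;> linarith [this.1, this.2]
    have e2 := hFb y hy
    generalize k * y - H y = η at e1
    have e3 : -(F y * η) ≤ M ^ 3 * L ^ 4 := by
      calc _ ≤ |F y * η| := neg_le_abs _
        _ = |F y| * |η| := abs_mul _ _
        _ ≤ (M * L) * (M ^ 2 * L ^ 3) := by gcongr
        _ = _ := by ring
    have e4 : η ^ 2 ≤ M ^ 4 * L ^ 6 := by
      calc η ^ 2 = |η| ^ 2 := (sq_abs _).symm
        _ ≤ (M ^ 2 * L ^ 3) ^ 2 := by gcongr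
        _ = _ := by ring
    have e5 := mul_le_mul_of_nonneg_left e3 (by positivity : 0 ≤ 2 * l ^ 3)
    have e6 := mul_le_mul_of_nonneg_left e4 (by positivity : 0 ≤ l ^ 4)
    nlinarith

lemma mu_lower {L a : ℝ} (hL : 0 < L) {B : ℝ → ℝ} (hB : Continuous B) {M : ℝ}
    (hM : ∀ y ∈ Icc 0 L, |B y| ≤ M) (h0 : ∫ y in (0 : ℝ)..L, B y = 0) {l : ℝ} (hl : 0 < l) :
    l ^ 2 + a + l ^ 2 * (kk L B * Real.exp (-(4 * (l * (M * L ^ 2))))) ≤ mu L a B l := by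
  have hM0 : 0 ≤ M := (abs_nonneg _).trans (hM 0 ⟨le_rfl, hL.le⟩)
  obtain ⟨F, hFdef⟩ : ∃ F : ℝ → ℝ, F = fun x => ∫ s in (0 : ℝ)..x, B s := ⟨_, rfl⟩
  have hF : ∀ x, HasDerivAt F (B x) x := fun x => hFdef ▸ prim_hasDerivAt hB x
  have hFc : Continuous F := continuous_iff_continuousAt.2 fun x => (hF x).continuousAt
  have hH := prim_hasDerivAt hFc
  have hHb := fun y hy => prim_bound (L := L) (f := F) (N := M * L)
    (fun y hy => hFdef ▸ prim_bound hM hy) (x := y) hy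
  obtain ⟨H, hHdef⟩ : ∃ H : ℝ → ℝ, H = fun x => ∫ s in (0 : ℝ)..x, F s := ⟨_, rfl⟩
  rw [← hHdef] at hH
  replace hHb : ∀ y ∈ Icc 0 L, |H y| ≤ M * L ^ 2 := by
    intro y hy
    have := hHb y hy
    rw [hHdef]; linarith
  have hHc : Continuous H := continuous_iff_continuousAt.2 fun x => (hH x).continuousAt
  have hFL : F L = 0 := by rw [hFdef]; exact h0
  have hF0 : F 0 = 0 := by rw [hFdef]; simp
  have hkL : kk L B * L = ∫ x in (0 : ℝ)..L, F x ^ 2 := by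
    rw [kk, hFdef]; field_simp
  obtain ⟨s, hs⟩ : ∃ s, s = l * (M * L ^ 2) := ⟨_, rfl⟩
  rw [← hs]
  obtain ⟨ψ, hψdef⟩ : ∃ ψ : ℝ → ℝ, ψ = fun x => Real.exp (-(l * H x)) := ⟨_, rfl⟩
  have hψ : ∀ x, HasDerivAt ψ (ψ x * (-(l * F x))) x := by
    intro x
    rw [hψdef]
    exact (((hH x).const_mul l).neg).exp
  have hψd : deriv ψ = fun x => ψ x * (-(l * F x)) := funext fun x => (hψ x).deriv
  have hψc : Continuous ψ := continuous_iff_continuousAt.2 fun x => (hψ x).continuousAt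
  have hψ1 : ContDiff ℝ 1 ψ := by
    rw [contDiff_one_iff_deriv]
    refine ⟨fun x => (hψ x).differentiableAt, ?_⟩
    rw [hψd]; fun_prop
  have hψpos : ∀ x, 0 < ψ x := fun x => by rw [hψdef]; exact Real.exp_pos _
  have hψb : ∀ y ∈ Icc 0 L, Real.exp (-(2 * s)) ≤ ψ y ^ 2 ∧ ψ y ^ 2 ≤ Real.exp (2 * s) := by
    intro y hy
    have h1 := abs_le.1 (hHb y hy)
    have h2 := mul_le_mul_of_nonneg_left h1.1 hl.le
    have h3 := mul_le_mul_of_nonneg_left h1.2 hl.le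
    have : ψ y ^ 2 = Real.exp (2 * (-(l * H y))) := by
      rw [hψdef, two_mul, Real.exp_add, sq]
    rw [this, Real.exp_le_exp, Real.exp_le_exp]
    constructor <;> linarith
  have hn : ∃ y ∈ Icc (0 : ℝ) L, ψ y ≠ 0 := ⟨0, ⟨le_rfl, hL.le⟩, (hψpos 0).ne'⟩
  refine le_trans ?_ (le_mu hL hB.continuousOn l hψ1.contDiffOn hn)
  have hpos := aux_pos hL hψc.continuousOn hn
  rw [le_div_iff₀ hpos, hψd]
  have hftc : ∫ y in (0 : ℝ)..L, (B y * ψ y ^ 2 + F y * (2 * ψ y * (ψ y * (-(l * F y))))) = 0 := by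
    rw [intervalIntegral.integral_eq_sub_of_hasDerivAt (f := fun y => F y * ψ y ^ 2) _
      (Continuous.intervalIntegrable (by fun_prop) _ _)]
    · simp [hF0, hFL]
    · intro x hx
      refine ((hF x).mul ((hψ x).pow 2)).congr_deriv ?_
      simp
  have hnum : (∫ y in (0 : ℝ)..L, (-(ψ y * (-(l * F y))) ^ 2 +
      (l ^ 2 + l * B y + a) * (ψ y) ^ 2)) =
      (l ^ 2 + a) * (∫ y in (0 : ℝ)..L, ψ y ^ 2) +
        l ^ 2 * ∫ y in (0 : ℝ)..L, F y ^ 2 * ψ y ^ 2 := by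
    have e : ∀ y, (-(ψ y * (-(l * F y))) ^ 2 + (l ^ 2 + l * B y + a) * (ψ y) ^ 2) =
      ((l ^ 2 + a) * ψ y ^ 2 + l ^ 2 * (F y ^ 2 * ψ y ^ 2)) +
        l * (B y * ψ y ^ 2 + F y * (2 * ψ y * (ψ y * (-(l * F y))))) := fun y => by ring
    simp only [e]
    rw [intervalIntegral.integral_add, intervalIntegral.integral_add,
      intervalIntegral.integral_const_mul, intervalIntegral.integral_const_mul,
      intervalIntegral.integral_const_mul, hftc, mul_zero, add_zero]
    all_goals exact Continuous.intervalIntegrable (by fun_prop) _ _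
  rw [hnum]
  have g1 : Real.exp (-(2 * s)) * (kk L B * L) ≤ ∫ y in (0 : ℝ)..L, F y ^ 2 * ψ y ^ 2 := by
    rw [hkL, ← intervalIntegral.integral_const_mul]
    refine intervalIntegral.integral_mono_on hL.le
      (Continuous.intervalIntegrable (by fun_prop) _ _)
      (Continuous.intervalIntegrable (by fun_prop) _ _) ?_
    intro y hy
    nlinarith [mul_le_mul_of_nonneg_left (hψb y hy).1 (sq_nonneg (F y))]
  have g2 : ∫ y in (0 : ℝ)..L, ψ y ^ 2 ≤ Real.exp (2 * s) * L := by
    have : ∫ y in (0 : ℝ)..L, ψ y ^ 2 ≤ ∫ y in (0 : ℝ)..L, Real.exp (2 * s) := by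
      refine intervalIntegral.integral_mono_on hL.le
        (Continuous.intervalIntegrable (by fun_prop) _ _)
        (Continuous.intervalIntegrable (by fun_prop) _ _) ?_
      intro y hy
      exact (hψb y hy).2
    rw [intervalIntegral.integral_const] at this
    simpa [mul_comm] using this
  have g3 : kk L B * Real.exp (-(4 * s)) * (∫ y in (0 : ℝ)..L, ψ y ^ 2) ≤
      ∫ y in (0 : ℝ)..L, F y ^ 2 * ψ y ^ 2 := by
    have hk0 := (kk_bounds hL hM).1
    calc _ ≤ kk L B * Real.exp (-(4 * s)) * (Real.exp (2 * s) * L) := by gcongr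
      _ = Real.exp (-(2 * s)) * (kk L B * L) := by
        have : Real.exp (-(2 * s)) = Real.exp (-(4 * s)) * Real.exp (2 * s) := by
          rw [← Real.exp_add]; congr 1; ring
        rw [this]; ring
      _ ≤ _ := g1
  nlinarith [mul_le_mul_of_nonneg_left g3 (sq_nonneg l)]

lemma amgm {a l x : ℝ} (ha : 0 < a) (hl : 0 < l) (hx : 0 ≤ x) :
    2 * Real.sqrt a * (1 + x / 2 - x ^ 2 / 4) ≤ l * (1 + x) + a / l := by
  obtain ⟨r, hr⟩ : ∃ r, r = Real.sqrt a := ⟨_, rfl⟩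
  have hr0 : 0 < r := hr ▸ Real.sqrt_pos.2 ha
  have hra : a = r ^ 2 := by rw [hr, Real.sq_sqrt ha.le]
  obtain ⟨t, ht⟩ : ∃ t, t = Real.sqrt (1 + x) := ⟨_, rfl⟩
  have ht1 : 1 ≤ t := by rw [ht]; exact Real.one_le_sqrt.2 (by linarith)
  have htx : x = t ^ 2 - 1 := by rw [ht, Real.sq_sqrt (by linarith)]; ring
  have h1 : 1 + x / 2 - x ^ 2 / 4 ≤ t := by
    rw [htx]
    nlinarith [mul_nonneg (sq_nonneg (t - 1)) (by nlinarith : 0 ≤ (t + 1) ^ 2 - 2)]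
  have h2 : 2 * r * t ≤ l * (1 + x) + a / l := by
    have : l * (1 + x) + a / l - 2 * r * t = (l * t - r) ^ 2 / l := by
      rw [htx, hra]; field_simp; ring
    have : 0 ≤ (l * t - r) ^ 2 / l := by positivity
    linarith
  rw [← hr]
  nlinarith

lemma det_cont {L a : ℝ} (hL : 0 < L) (ha : 0 < a) {B : ℝ → ℝ} (hB : Continuous B) {M : ℝ}
    (hM : ∀ y ∈ Icc 0 L, |B y| ≤ M) (h0 : ∫ y in (0 : ℝ)..L, B y = 0) :
    |cstar L a B - 2 * Real.sqrt a - Real.sqrt a * kk L B| ≤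
      16 * a * L ^ 4 * M ^ 3 + (Real.sqrt a * a * L ^ 6 + Real.sqrt a * L ^ 4) * M ^ 4 := by
  have hM0 : 0 ≤ M := (abs_nonneg _).trans (hM 0 ⟨le_rfl, hL.le⟩)
  have hr0 : 0 < Real.sqrt a := Real.sqrt_pos.2 ha
  have hra : a = Real.sqrt a ^ 2 := by rw [Real.sq_sqrt ha.le]
  obtain ⟨hk0, hk1⟩ := kk_bounds hL hM
  have hup := mu_upper (a := a) hL hB hM h0 hr0
  have hlow := fun l hl => mu_lower (a := a) hL hB hM h0 (l := l) hl
  generalize kk L B = k at *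
  have hk2 : k ^ 2 ≤ M ^ 4 * L ^ 4 := by
    calc k ^ 2 ≤ (M ^ 2 * L ^ 2) ^ 2 := by gcongr
      _ = _ := by ring
  generalize hr : Real.sqrt a = r at *
  subst hra
  have p3 : 0 ≤ r ^ 2 * L ^ 4 * M ^ 3 := by positivity
  have p4 : 0 ≤ r * r ^ 2 * L ^ 6 * M ^ 4 := by positivity
  have p5 : 0 ≤ r * L ^ 4 * M ^ 4 := by positivity
  rw [abs_le]
  constructor
  · have : 2 * r + r * k - 16 * r ^ 2 * L ^ 4 * M ^ 3 - r * L ^ 4 * M ^ 4 ≤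
        cstar L (r ^ 2) B := by
      refine le_cstar fun l hl => ?_
      have hk3 := mul_le_mul_of_nonneg_left hk2 hr0.le
      rcases le_or_gt l (4 * r) with h4 | h4
      · obtain ⟨x, hx⟩ : ∃ x, x = k * Real.exp (-(4 * (4 * r * (M * L ^ 2)))) := ⟨_, rfl⟩
        have hx0 : 0 ≤ x := by rw [hx]; positivity
        have hxk : x ≤ k := by
          rw [hx]
          refine mul_le_of_le_one_right hk0 (Real.exp_le_one_iff.2 ?_)
          have : 0 ≤ (4 * (4 * r * (M * L ^ 2))) := by positivity
          linarith
        have hxl : k - 16 * r * M ^ 3 * L ^ 4 ≤ x := by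
          have h1 := Real.add_one_le_exp (-(4 * (4 * r * (M * L ^ 2))))
          have h2 := mul_le_mul_of_nonneg_left h1 hk0
          have h3 := mul_le_mul_of_nonneg_left hk1 (by positivity : 0 ≤ 16 * r * M * L ^ 2)
          rw [hx]; nlinarith
        have h5 : l ^ 2 + r ^ 2 + l ^ 2 * x ≤ mu L (r ^ 2) B l := by
          refine le_trans ?_ (hlow l hl)
          rw [hx]
          gcongr
        have h6 := amgm (a := r ^ 2) (by positivity) hl hx0
        rw [hr] at h6
        have h7 : l * (1 + x) + r ^ 2 / l ≤ mu L (r ^ 2) B l / l := by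
          rw [le_div_iff₀ hl]
          have : (l * (1 + x) + r ^ 2 / l) * l = l ^ 2 + r ^ 2 + l ^ 2 * x := by
            field_simp
            ring
          linarith
        have h8 : x ^ 2 ≤ k ^ 2 := by gcongr
        have h9 := mul_le_mul_of_nonneg_left h8 hr0.le
        have h10 := mul_le_mul_of_nonneg_left hxl hr0.le
        nlinarith
      · have h5 : l ≤ mu L (r ^ 2) B l / l := by
          rw [le_div_iff₀ hl]
          have := hlow l hl
          have : 0 ≤ l ^ 2 * (k * Real.exp (-(4 * (l * (M * L ^ 2))))) := by positivity
          nlinarith [sq_nonneg r]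
        have : k ≤ 2 + k ^ 2 := by nlinarith [sq_nonneg (k - 1)]
        have := mul_le_mul_of_nonneg_left this hr0.le
        nlinarith
    nlinarith
  · have h1 := cstar_le (a := r ^ 2) hL (by positivity) hB.continuousOn hr0
    have h2 : mu L (r ^ 2) B r / r ≤ 2 * r + r * k + 2 * r ^ 2 * (M ^ 3 * L ^ 4) +
        r ^ 3 * (M ^ 4 * L ^ 6) := by
      rw [div_le_iff₀ hr0]
      nlinarith
    nlinarith

lemma det_on {L a : ℝ} (hL : 0 < L) (ha : 0 < a) {B : ℝ → ℝ} (hB : ContinuousOn B (Icc 0 L))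
    {M : ℝ} (hM : ∀ y ∈ Icc 0 L, |B y| ≤ M) (h0 : ∫ y in (0 : ℝ)..L, B y = 0) :
    |cstar L a B - 2 * Real.sqrt a - Real.sqrt a * kk L B| ≤
      16 * a * L ^ 4 * M ^ 3 + (Real.sqrt a * a * L ^ 6 + Real.sqrt a * L ^ 4) * M ^ 4 := by
  obtain ⟨E, hE, hEB⟩ : ∃ E : ℝ → ℝ, Continuous E ∧ ∀ y ∈ Icc 0 L, E y = B y :=
    ⟨IccExtend hL.le ((Icc 0 L).domRestrict B), (continuousOn_iff_continuous_domRestrict.1 hB).Icc_extend',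
      fun y hy => by rw [IccExtend_of_mem _ _ hy]; rfl⟩
  have hint : ∀ x ∈ Icc 0 L, ∫ s in (0 : ℝ)..x, E s = ∫ s in (0 : ℝ)..x, B s := by
    intro x hx
    refine intervalIntegral.integral_congr fun y hy => ?_
    rw [uIcc_of_le hx.1] at hy
    exact hEB y ⟨hy.1, hy.2.trans hx.2⟩
  have hk : kk L E = kk L B := by
    unfold kk
    congr 1
    refine intervalIntegral.integral_congr fun y hy => ?_
    rw [uIcc_of_le hL.le] at hy
    simp only [hint y hy]
  rw [← hk, ← cstar_congr hL ha hE.continuousOn hB hEB]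
  exact det_cont hL ha hE (fun y hy => by rw [hEB y hy]; exact hM y hy)
    (by rw [hint L ⟨hL.le, le_rfl⟩, h0])

lemma kk_meas {Ω : Type*} [MeasurableSpace Ω] {L : ℝ} (hL : 0 < L) {b : Ω → ℝ → ℝ}
    (hmeas : Measurable (Function.uncurry b)) : StronglyMeasurable (fun ω => kk L (b ω)) := by
  have h1 : Measurable (fun z : (Ω × ℝ) × ℝ =>
      if 0 < z.2 ∧ z.2 ≤ z.1.2 then b z.1.1 z.2 else 0) := by
    refine Measurable.ite ?_ ?_ measurable_const
    · exact (measurableSet_lt measurable_const measurable_snd).inter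
        (measurableSet_le measurable_snd (measurable_snd.comp measurable_fst))
    · exact hmeas.comp ((measurable_fst.comp measurable_fst).prodMk measurable_snd)
  have h2 := h1.stronglyMeasurable.integral_prod_right' (ν := (volume : Measure ℝ))
  have h3 := (h2.pow 2).integral_prod_right' (ν := (volume : Measure ℝ).restrict (Ioc 0 L))
  have h4 := h3.const_mul (1 / L)
  convert h4 using 2 with ω
  unfold kk
  congr 1
  rw [intervalIntegral.integral_of_le hL.le]
  refine setIntegral_congr_fun measurableSet_Ioc fun x hx => ?_
  simp only [Pi.pow_apply]
  congr 1
  rw [intervalIntegral.integral_of_le hx.1.le, ← MeasureTheory.integral_indicator measurableSet_Ioc]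
  refine integral_congr_ae (Filter.Eventually.of_forall fun s => ?_)
  simp only [indicator, mem_Ioc]

lemma cstar_meas {Ω : Type*} [MeasurableSpace Ω] (P : Measure Ω)
    {L a : ℝ} (hL : 0 < L) (ha : 0 < a) {b : Ω → ℝ → ℝ}
    (hmeas : Measurable (Function.uncurry b))
    (hpath : ∀ᵐ ω ∂P, ContinuousOn (b ω) (Icc 0 L)) :
    AEStronglyMeasurable (fun ω => cstar L a (b ω)) P := by
  obtain ⟨q, hq⟩ : ∃ q : ℕ → ℕ → ℝ → ℝ,
    q = fun n k y => (n.choose k : ℝ) * (y / L) ^ k * (1 - y / L) ^ (n - k) := ⟨_, rfl⟩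
  have hqc : ∀ n k, Continuous (q n k) := by intro n k; rw [hq]; fun_prop
  have hmem : ∀ y ∈ Icc 0 L, y / L ∈ unitInterval := fun y hy =>
    ⟨div_nonneg hy.1 hL.le, (div_le_one hL).2 hy.2⟩
  have hqb : ∀ n k y (hy : y ∈ Icc 0 L), q n k y = bernstein n k ⟨y / L, hmem y hy⟩ := by
    intro n k y hy
    rw [bernstein_apply, hq]
  obtain ⟨Φ, hΦ⟩ : ∃ Φ : (n : ℕ) → (Fin (n + 1) → ℝ) → ℝ,
    Φ = fun n v => cstar L a (fun y => ∑ k : Fin (n + 1), q n k y * v k) := ⟨_, rfl⟩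
  have hcc : ∀ n (v : Fin (n + 1) → ℝ), Continuous (fun y => ∑ k : Fin (n + 1), q n k y * v k) :=
    fun n v => continuous_finsetSum _ fun k _ => (hqc n k).mul continuous_const
  have hΦc : ∀ n, Continuous (Φ n) := by
    intro n
    refine (LipschitzWith.mk_one fun v w => ?_).continuous
    rw [Real.dist_eq, hΦ]
    refine cstar_le_add hL ha (hcc n v).continuousOn (hcc n w).continuousOn fun y hy => ?_
    rw [← Finset.sum_sub_distrib]
    calc |∑ k : Fin (n + 1), (q n k y * v k - q n k y * w k)|
        ≤ ∑ k : Fin (n + 1), |q n k y * v k - q n k y * w k| := Finset.abs_sum_le_sum_abs _ _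
      _ ≤ ∑ k : Fin (n + 1), q n k y * dist v w := by
          refine Finset.sum_le_sum fun k _ => ?_
          have h0 : 0 ≤ q n k y := by rw [hqb n k y hy]; exact bernstein_nonneg
          rw [← mul_sub, abs_mul, abs_of_nonneg h0]
          refine mul_le_mul_of_nonneg_left ?_ h0
          rw [← Real.dist_eq]
          exact dist_le_pi_dist v w k
      _ = dist v w := by
          rw [← Finset.sum_mul]
          have : ∑ k : Fin (n + 1), q n k y = 1 := by
            rw [← bernstein.probability n ⟨y / L, hmem y hy⟩]
            exact Finset.sum_congr rfl fun k _ => hqb n k y hy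
          rw [this, one_mul]
  refine aestronglyMeasurable_of_tendsto_ae Filter.atTop
    (f := fun n ω => Φ n (fun k => b ω (L * ((k : ℕ) / (n : ℝ))))) ?_ ?_
  · intro n
    refine ((hΦc n).measurable.comp ?_).aestronglyMeasurable
    refine measurable_pi_lambda _ fun k => ?_
    exact hmeas.comp (measurable_id.prodMk measurable_const)
  · filter_upwards [hpath] with ω hω
    let f : C(unitInterval, ℝ) := ⟨fun t => b ω (L * t), by
      refine hω.comp_continuous (by fun_prop) fun t => ?_
      exact ⟨mul_nonneg hL.le t.2.1, mul_le_of_le_one_right hL.le t.2.2⟩⟩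
    have hf := (tendsto_iff_norm_sub_tendsto_zero).1 (bernsteinApproximation_uniform f)
    rw [tendsto_iff_norm_sub_tendsto_zero]
    refine squeeze_zero (fun _ => norm_nonneg _) (fun n => ?_) hf
    rw [Real.norm_eq_abs, hΦ]
    refine cstar_le_add hL ha (hcc n _).continuousOn hω fun y hy => ?_
    have h1 := (bernsteinApproximation n f - f).norm_coe_le_norm ⟨y / L, hmem y hy⟩
    rw [Real.norm_eq_abs, ContinuousMap.sub_apply, bernsteinApproximation.apply] at h1
    refine le_trans (le_of_eq ?_) h1
    congr 2
    · refine Finset.sum_congr rfl fun k _ => ?_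
      rw [hqb n k y hy, smul_eq_mul]
      rfl
    · change b ω y = b ω (L * (y / L))
      rw [mul_div_cancel₀ _ hL.ne']

/-- averaged quadratic enhancement for random shears: if the random
shear `b(ω,·)` has a.s. continuous mean-zero paths on `[0,L]` and
`E[‖b‖_∞⁶] < ∞`, then with `k(ω) := (1/L)∫₀ᴸ (∫₀ˣ b(ω,s) ds)² dx`,
`| E[c*(δ b)] − c₀ − (c₀ δ²/2) E[k] | ≤ C δ³` for all small `δ > 0`. -/
theorem stmt6 {Ω : Type*} [MeasurableSpace Ω] (P : Measure Ω) [IsProbabilityMeasure P]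
    (L a : ℝ) (hL : 0 < L) (ha : 0 < a) (b : Ω → ℝ → ℝ)
    (hmeas : Measurable (Function.uncurry b))
    (hpath : ∀ᵐ ω ∂P, ContinuousOn (b ω) (Icc 0 L) ∧ (∫ y in (0 : ℝ)..L, b ω y) = 0)
    (hmom : Integrable (fun ω => (supNorm L (b ω)) ^ 6) P) :
    ∃ C > (0 : ℝ), ∃ δ₀ > (0 : ℝ), ∀ δ : ℝ, 0 < δ → δ < δ₀ →
      |(∫ ω, cstar L a (fun y => δ * b ω y) ∂P) - 2 * Real.sqrt a -
          (2 * Real.sqrt a * δ ^ 2 / 2) *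
            (∫ ω, ((1 / L) * ∫ x in (0 : ℝ)..L, (∫ s in (0 : ℝ)..x, b ω s) ^ 2) ∂P)| ≤
        C * δ ^ 3 := by
  have hk_meas : AEStronglyMeasurable (fun ω => kk L (b ω)) P := (kk_meas hL hmeas).aestronglyMeasurable
  obtain ⟨M, hMdef⟩ : ∃ M : Ω → ℝ, M = fun ω => supNorm L (b ω) := ⟨_, rfl⟩
  have hMom : Integrable (fun ω => M ω ^ 6) P := by rw [hMdef]; exact hmom
  have hMb : ∀ᵐ ω ∂P, ∀ y ∈ Icc 0 L, |b ω y| ≤ M ω := by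
    filter_upwards [hpath] with ω hω y hy
    rw [hMdef]
    exact le_csSup (isCompact_Icc.image_of_continuousOn hω.1.abs).bddAbove ⟨y, hy, rfl⟩
  have hI : Integrable (fun ω => 1 + M ω ^ 6) P := (integrable_const _).add hMom
  have hkI : Integrable (fun ω => kk L (b ω)) P := by
    refine (hI.mul_const (L ^ 2)).mono' hk_meas ?_
    filter_upwards [hMb] with ω hω
    obtain ⟨h0, h1⟩ := kk_bounds hL hω
    rw [Real.norm_eq_abs, abs_of_nonneg h0]
    refine h1.trans (mul_le_mul_of_nonneg_right ?_ (by positivity))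
    generalize M ω = m
    nlinarith [sq_nonneg (m ^ 2), sq_nonneg (m ^ 2 - 1), sq_nonneg m,
      mul_nonneg (sq_nonneg m) (sq_nonneg (m ^ 2 - 1))]
  obtain ⟨D, hD⟩ : ∃ D, D = 16 * a * L ^ 4 +
    (Real.sqrt a * a * L ^ 6 + Real.sqrt a * L ^ 4) := ⟨_, rfl⟩
  have hD0 : 0 < D := by rw [hD]; positivity
  have hE1 : 1 ≤ ∫ ω, (1 + M ω ^ 6) ∂P := by
    rw [integral_add (integrable_const _) hMom]
    have : 0 ≤ ∫ ω, M ω ^ 6 ∂P := integral_nonneg fun ω => by positivity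
    simp
    linarith
  refine ⟨D * ∫ ω, (1 + M ω ^ 6) ∂P, by positivity, 1, one_pos, fun δ hδ hδ1 => ?_⟩
  have hc_meas : AEStronglyMeasurable (fun ω => cstar L a (fun y => δ * b ω y)) P := by
    refine cstar_meas P hL ha (b := fun ω y => δ * b ω y) (hmeas.const_mul δ) ?_
    filter_upwards [hpath] with ω hω
    exact hω.1.const_smul δ
  have hbound : ∀ᵐ ω ∂P, ‖cstar L a (fun y => δ * b ω y) - 2 * Real.sqrt a -
      Real.sqrt a * δ ^ 2 * kk L (b ω)‖ ≤ D * δ ^ 3 * (1 + M ω ^ 6) := by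
    filter_upwards [hpath, hMb] with ω hω hMω
    have h1 := det_on hL ha (B := fun y => δ * b ω y) (hω.1.const_smul δ) (M := δ * M ω)
      (fun y hy => by
        rw [abs_mul, abs_of_pos hδ]
        exact mul_le_mul_of_nonneg_left (hMω y hy) hδ.le)
      (by rw [intervalIntegral.integral_const_mul, hω.2, mul_zero])
    have h2 : kk L (fun y => δ * b ω y) = δ ^ 2 * kk L (b ω) := by
      simp only [kk, intervalIntegral.integral_const_mul, mul_pow]
      ring
    rw [h2, ← mul_assoc] at h1
    rw [Real.norm_eq_abs]
    refine h1.trans ?_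
    have hm0 : 0 ≤ M ω := (abs_nonneg _).trans (hMω 0 ⟨le_rfl, hL.le⟩)
    generalize M ω = m at hm0
    have q3 : (δ * m) ^ 3 ≤ δ ^ 3 * (1 + m ^ 6) := by
      rw [mul_pow]
      refine mul_le_mul_of_nonneg_left ?_ (by positivity)
      nlinarith [sq_nonneg (m ^ 3 - 1), sq_nonneg (m ^ 3)]
    have q4 : (δ * m) ^ 4 ≤ δ ^ 3 * (1 + m ^ 6) := by
      rw [mul_pow]
      refine mul_le_mul (pow_le_pow_of_le_one hδ.le hδ1.le (by norm_num)) ?_ (by positivity)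
        (by positivity)
      nlinarith [sq_nonneg (m ^ 2), sq_nonneg (m ^ 2 - 1), sq_nonneg m,
        mul_nonneg (sq_nonneg m) (sq_nonneg (m ^ 2 - 1))]
    calc _ ≤ 16 * a * L ^ 4 * (δ ^ 3 * (1 + m ^ 6)) +
          (Real.sqrt a * a * L ^ 6 + Real.sqrt a * L ^ 4) * (δ ^ 3 * (1 + m ^ 6)) := by gcongr
      _ = _ := by rw [hD]; ring
  have hI2 : Integrable (fun ω => D * δ ^ 3 * (1 + M ω ^ 6)) P := hI.const_mul _
  have hkI2 : Integrable (fun ω => Real.sqrt a * δ ^ 2 * kk L (b ω)) P := hkI.const_mul _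
  have hdiff : Integrable (fun ω => cstar L a (fun y => δ * b ω y) - 2 * Real.sqrt a -
      Real.sqrt a * δ ^ 2 * kk L (b ω)) P :=
    hI2.mono' ((hc_meas.sub aestronglyMeasurable_const).sub hkI2.aestronglyMeasurable) hbound
  have hcI1 : Integrable (fun ω => cstar L a (fun y => δ * b ω y) - 2 * Real.sqrt a) P := by
    refine (hdiff.add hkI2).congr (Filter.Eventually.of_forall fun ω => ?_)
    simp
  have hcI : Integrable (fun ω => cstar L a (fun y => δ * b ω y)) P := by
    refine (hcI1.add (integrable_const (2 * Real.sqrt a))).congr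
      (Filter.Eventually.of_forall fun ω => ?_)
    simp
  have hmain := norm_integral_le_of_norm_le hI2 hbound
  rw [integral_sub hcI1 hkI2, integral_sub hcI (integrable_const _), MeasureTheory.integral_const_mul,
    MeasureTheory.integral_const_mul, Real.norm_eq_abs] at hmain
  simp only [MeasureTheory.integral_const, probReal_univ, one_smul] at hmain
  simp only [kk] at hmain
  convert hmain using 1
  · congr 1
    ring
  · rw [MeasureTheory.integral_const_mul]
    ring
end

section
/- (A mean-zero shear always enhances the speed.) Let b : [0,L] → ℝ be continuous with ∫₀ᴸ b(y) dy = 0. Then c*(b) ≥ c₀, i.e. inf_{λ>0} μ_b(λ)/λ ≥ 2√a. -/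
open Real Set MeasureTheory intervalIntegral

/-- a mean-zero shear always enhances the speed:
`c*(b) ≥ c₀ = 2√a` for continuous `b` on `[0,L]` with `∫₀ᴸ b = 0`. -/
theorem stmt7 (L a : ℝ) (hL : 0 < L) (ha : 0 < a) (b : ℝ → ℝ)
    (hb : ContinuousOn b (Icc 0 L))
    (hmean : (∫ y in (0 : ℝ)..L, b y) = 0) :
    2 * Real.sqrt a ≤ cstar L a b := by
  have hcont : ∀ l : ℝ, ContinuousOn (fun y => l ^ 2 + l * b y + a) (Icc 0 L) := fun l => by
    fun_prop
  have hbdd : ∀ l : ℝ, BddAbove { m : ℝ | ∃ ψ : ℝ → ℝ, ContDiffOn ℝ 1 ψ (Icc 0 L) ∧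
      (∃ y ∈ Icc (0 : ℝ) L, ψ y ≠ 0) ∧
      m = (∫ y in (0 : ℝ)..L, (-(deriv ψ y) ^ 2 + (l ^ 2 + l * b y + a) * (ψ y) ^ 2)) /
        (∫ y in (0 : ℝ)..L, (ψ y) ^ 2) } := by
    intro l
    obtain ⟨M, hM⟩ := (isCompact_Icc.image_of_continuousOn (hcont l)).bddAbove
    refine ⟨max M 0, ?_⟩
    rintro m ⟨ψ, hψ, -, rfl⟩
    have hnn : 0 ≤ ∫ y in (0 : ℝ)..L, (ψ y) ^ 2 :=
      intervalIntegral.integral_nonneg hL.le (fun y _ => sq_nonneg _)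
    refine div_le_of_le_mul₀ hnn (le_max_right _ _) ?_
    by_cases hi : IntervalIntegrable
        (fun y => -(deriv ψ y) ^ 2 + (l ^ 2 + l * b y + a) * (ψ y) ^ 2) volume 0 L
    · rw [← intervalIntegral.integral_const_mul]
      refine intervalIntegral.integral_mono_on hL.le hi ?_ ?_
      · apply ContinuousOn.intervalIntegrable
        rw [uIcc_of_le hL.le]
        exact continuousOn_const.mul (hψ.continuousOn.pow 2)
      · intro y hy
        have h1 : l ^ 2 + l * b y + a ≤ max M 0 :=
          (hM (mem_image_of_mem _ hy)).trans (le_max_left _ _)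
        nlinarith [sq_nonneg (deriv ψ y), mul_le_mul_of_nonneg_right h1 (sq_nonneg (ψ y))]
    · rw [intervalIntegral.integral_undef hi]
      exact mul_nonneg (le_max_right _ _) hnn
  have hbi : IntervalIntegrable b volume 0 L := by
    apply ContinuousOn.intervalIntegrable
    rwa [uIcc_of_le hL.le]
  have hmu : ∀ l : ℝ, l ^ 2 + a ≤ mu L a b l := by
    intro l
    refine le_csSup (hbdd l) ⟨fun _ => 1, contDiffOn_const,
      ⟨0, ⟨le_rfl, hL.le⟩, one_ne_zero⟩, ?_⟩
    have h2 : (∫ y in (0 : ℝ)..L, (-(deriv (fun _ : ℝ => (1 : ℝ)) y) ^ 2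
        + (l ^ 2 + l * b y + a) * (1 : ℝ) ^ 2)) = L * (l ^ 2 + a) := by
      have h3 : (fun y : ℝ => -(deriv (fun _ : ℝ => (1 : ℝ)) y) ^ 2
        + (l ^ 2 + l * b y + a) * (1 : ℝ) ^ 2) = fun y => (l ^ 2 + a) + l * b y := by
        funext y
        rw [deriv_const]
        ring
      rw [h3, intervalIntegral.integral_add intervalIntegrable_const (hbi.const_mul l),
        intervalIntegral.integral_const_mul, hmean]
      simp
      ring
    rw [h2]
    simp
    field_simp
  unfold cstar
  refine le_csInf ⟨_, 1, one_pos, rfl⟩ ?_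
  rintro v ⟨l, hl, rfl⟩
  rw [le_div_iff₀ hl]
  nlinarith [hmu l, sq_nonneg (l - Real.sqrt a), Real.sq_sqrt ha.le]
end

section
/- (Explicit enhancement integral for the exponential covariance.) Let A > 0, ρ > 0, L > 0. Define f(s,y) := ρ e^{−A|s−y|} for s, y ∈ [0,L], g(s) := (1/L)∫₀ᴸ f(s,y) dy, and ⟨g⟩ := (1/L)∫₀ᴸ g(s) ds. Then (1/L) ∫₀ᴸ ( x²⟨g⟩ − 2x ∫₀ˣ g(s) ds + ∫₀ˣ ∫₀ˣ f(s,y) ds dy ) dx = ρ · ( e^{−AL}( 4/(L²A⁴) − 1/(3A²) ) + L/(3A) − 4/(L²A⁴) − 5/(3A²) + 4/(L A³) ). -/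
open Real Set intervalIntegral

lemma hE1 (A x : ℝ) : HasDerivAt (fun x => Real.exp (-A * x)) (-A * Real.exp (-A * x)) x := by
  have := ((hasDerivAt_id x).const_mul (-A)).exp
  simp only [id, mul_one] at this
  rw [mul_comm]; exact this

lemma hE2 (A L x : ℝ) :
    HasDerivAt (fun x => Real.exp (-A * (L - x))) (A * Real.exp (-A * (L - x))) x := by
  have := (((hasDerivAt_id x).const_sub L).const_mul (-A)).exp
  simp only [id] at this
  convert this using 1; ring

/-- inner integral -/
lemma inner_int (A : ℝ) (hA : 0 < A) (x s : ℝ) (h0 : 0 ≤ s) (h1 : s ≤ x) :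
    ∫ y in (0 : ℝ)..x, Real.exp (-A * |s - y|) =
      (2 - Real.exp (-A * s) - Real.exp (-A * (x - s))) / A := by
  have hc : Continuous fun y : ℝ => Real.exp (-A * |s - y|) := by fun_prop
  rw [← integral_add_adjacent_intervals (hc.intervalIntegrable 0 s) (hc.intervalIntegrable s x)]
  have e1 : ∫ y in (0 : ℝ)..s, Real.exp (-A * |s - y|) = (1 - Real.exp (-A * s)) / A := by
    rw [integral_congr (g := fun y => Real.exp (-A * (s - y)))]
    · rw [integral_eq_sub_of_hasDerivAt (f := fun y => Real.exp (-A * (s - y)) / A)]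
      · simp; ring
      · intro y _
        refine HasDerivAt.congr_deriv ((hE2 A s y).div_const A) ?_
        field_simp
      · exact Continuous.intervalIntegrable (by fun_prop) _ _
    · intro y hy
      rw [uIcc_of_le h0] at hy
      simp only
      rw [abs_of_nonneg (by linarith [hy.2])]
  have e2 : ∫ y in s..x, Real.exp (-A * |s - y|) = (1 - Real.exp (-A * (x - s))) / A := by
    rw [integral_congr (g := fun y => Real.exp (-A * y) * Real.exp (A * s))]
    · rw [integral_eq_sub_of_hasDerivAt
        (f := fun y => -(Real.exp (-A * y) * Real.exp (A * s)) / A)]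
      · rw [← Real.exp_add, ← Real.exp_add]
        rw [show -A * x + A * s = -A * (x - s) by ring, show -A * s + A * s = 0 by ring]
        simp; ring
      · intro y _
        refine HasDerivAt.congr_deriv ((((hE1 A y).mul_const (Real.exp (A * s))).neg).div_const A) ?_
        field_simp
      · exact Continuous.intervalIntegrable (by fun_prop) _ _
    · intro y hy
      rw [uIcc_of_le h1] at hy
      simp only
      rw [abs_of_nonpos (by linarith [hy.1]), ← Real.exp_add]
      congr 1; ring
  rw [e1, e2]; ring

lemma mid_int (A : ℝ) (hA : 0 < A) (L x : ℝ) :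
    ∫ s in (0 : ℝ)..x, (2 - Real.exp (-A * s) - Real.exp (-A * (L - s))) / A =
      (2 * x - (1 - Real.exp (-A * x)) / A
        - (Real.exp (-A * (L - x)) - Real.exp (-A * L)) / A) / A := by
  rw [integral_eq_sub_of_hasDerivAt (f := fun s => (2 * s + Real.exp (-A * s) / A
        - Real.exp (-A * (L - s)) / A) / A)]
  · simp; ring
  · intro s _
    refine HasDerivAt.congr_deriv (((((hasDerivAt_id' s).const_mul 2).add ((hE1 A s).div_const A)).sub
      ((hE2 A L s).div_const A)).div_const A) ?_
    field_simp
    ring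
  · exact Continuous.intervalIntegrable (by fun_prop) _ _

/-- explicit enhancement integral for the exponential covariance:
with `f(s,y) := ρ e^{−A|s−y|}`, `g(s) := (1/L)∫₀ᴸ f(s,y) dy`, and
`⟨g⟩ := (1/L)∫₀ᴸ g(s) ds`, one has
`(1/L)∫₀ᴸ ( x²⟨g⟩ − 2x∫₀ˣ g + ∫₀ˣ∫₀ˣ f ) dx
  = ρ ( e^{−AL}(4/(L²A⁴) − 1/(3A²)) + L/(3A) − 4/(L²A⁴) − 5/(3A²) + 4/(LA³) )`. -/
theorem stmt13 (A ρ L : ℝ) (hA : 0 < A) (hρ : 0 < ρ) (hL : 0 < L)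
    (f : ℝ → ℝ → ℝ) (hf : ∀ s y : ℝ, f s y = ρ * Real.exp (-A * |s - y|))
    (g : ℝ → ℝ) (hg : ∀ s : ℝ, g s = (1 / L) * ∫ y in (0 : ℝ)..L, f s y)
    (gbar : ℝ) (hgbar : gbar = (1 / L) * ∫ s in (0 : ℝ)..L, g s) :
    (1 / L) * (∫ x in (0 : ℝ)..L,
        (x ^ 2 * gbar - 2 * x * (∫ s in (0 : ℝ)..x, g s) +
          ∫ y in (0 : ℝ)..x, ∫ s in (0 : ℝ)..x, f s y)) =
      ρ * (Real.exp (-A * L) * (4 / (L ^ 2 * A ^ 4) - 1 / (3 * A ^ 2)) +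
        L / (3 * A) - 4 / (L ^ 2 * A ^ 4) - 5 / (3 * A ^ 2) + 4 / (L * A ^ 3)) := by
  have hG : ∀ s ∈ Icc 0 L, g s = ρ / L *
      ((2 - Real.exp (-A * s) - Real.exp (-A * (L - s))) / A) := by
    intro s hs
    rw [hg]
    simp only [hf]
    rw [integral_const_mul, inner_int A hA L s hs.1 hs.2]
    ring
  have hGI : ∀ x ∈ Icc 0 L, ∫ s in (0 : ℝ)..x, g s = ρ / L *
      ((2 * x - (1 - Real.exp (-A * x)) / A
        - (Real.exp (-A * (L - x)) - Real.exp (-A * L)) / A) / A) := by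
    intro x hx
    rw [← mid_int A hA L x, ← integral_const_mul]
    apply integral_congr
    intro s hs
    rw [uIcc_of_le hx.1] at hs
    exact hG s ⟨hs.1, hs.2.trans hx.2⟩
  have hD : ∀ x ∈ Icc 0 L, ∫ y in (0 : ℝ)..x, ∫ s in (0 : ℝ)..x, f s y = ρ *
      ((2 * x - 2 * (1 - Real.exp (-A * x)) / A) / A) := by
    intro x hx
    have h := mid_int A hA x x
    have e : (2 * x - 2 * (1 - Real.exp (-A * x)) / A) / A = (2 * x - (1 - Real.exp (-A * x)) / A
        - (Real.exp (-A * (x - x)) - Real.exp (-A * x)) / A) / A := by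
      simp; ring
    rw [e, ← h, ← integral_const_mul]
    apply integral_congr
    intro y hy
    rw [uIcc_of_le hx.1] at hy
    simp only [hf]
    rw [integral_const_mul, ← inner_int A hA x y hy.1 hy.2]
    simp only [abs_sub_comm]
  have hgb : gbar = ρ / L ^ 2 * ((2 * L - 2 * (1 - Real.exp (-A * L)) / A) / A) := by
    rw [hgbar, hGI L ⟨hL.le, le_rfl⟩]
    simp
    ring
  rw [integral_congr (g := fun x => x ^ 2 * gbar - 2 * x * (ρ / L *
      ((2 * x - (1 - Real.exp (-A * x)) / A
        - (Real.exp (-A * (L - x)) - Real.exp (-A * L)) / A) / A)) + ρ *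
      ((2 * x - 2 * (1 - Real.exp (-A * x)) / A) / A))]
  · rw [integral_eq_sub_of_hasDerivAt (f := fun x => gbar / 3 * x ^ 3 +
      (-2 * ρ / (L * A)) * ((2 / 3) * x ^ 3
        + ((Real.exp (-A * L) - 1) / (2 * A)) * x ^ 2
        + (-1 / A ^ 2) * (x * Real.exp (-A * x)) + (-1 / A ^ 3) * Real.exp (-A * x)
        + (-1 / A ^ 2) * (x * Real.exp (-A * (L - x))) + (1 / A ^ 3) * Real.exp (-A * (L - x)))
      + ρ / A * (x ^ 2 + (-2 / A) * x + (-2 / A ^ 2) * Real.exp (-A * x)))]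
    · rw [hgb]
      simp only [sub_self, mul_zero, Real.exp_zero, sub_zero]
      field_simp
      ring
    · intro x _
      have h1 := hE1 A x
      have h2 := hE2 A L x
      have hx := hasDerivAt_id' x
      have p2 := hasDerivAt_pow 2 x
      have p3 := hasDerivAt_pow 3 x
      refine HasDerivAt.congr_deriv (((p3.const_mul (gbar / 3)).add
        (((((((p3.const_mul (2 / 3)).add
          (p2.const_mul ((Real.exp (-A * L) - 1) / (2 * A)))).add
          ((hx.mul h1).const_mul (-1 / A ^ 2))).add (h1.const_mul (-1 / A ^ 3))).add
          ((hx.mul h2).const_mul (-1 / A ^ 2))).add (h2.const_mul (1 / A ^ 3))).const_mul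
            (-2 * ρ / (L * A)))).add
        (((p2.add (hx.const_mul (-2 / A))).add (h1.const_mul (-2 / A ^ 2))).const_mul (ρ / A)))
        ?_
      push_cast
      field_simp
      ring
    · exact Continuous.intervalIntegrable (by fun_prop) _ _
  · intro x hx
    rw [uIcc_of_le hL.le] at hx
    simp only
    rw [hGI x hx, hD x hx]
end

section
/- (Existence of an optimal covariance parameter.) Fix L > 0 and define, for α > 0, F(α) := √α · ( e^{−αL}( 4/(L²α⁴) − 1/(3α²) ) + L/(3α) − 4/(L²α⁴) − 5/(3α²) + 4/(Lα³) ). Then F is continuous and strictly positive on (0,∞), F(α) → 0 as α → 0⁺, F(α) → 0 as α → ∞, and consequently there exists α* ∈ (0,∞) such that F(α*) = sup_{α > 0} F(α). -/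
open Real Set Filter

/-- The quadratic enhancement coefficient `E[⟨|χ_x|²⟩]` for an Ornstein–Uhlenbeck
shear with covariance `√α e^{−α|t|}` on the cross-section `[0,L]`. -/
noncomputable def F (L α : ℝ) : ℝ :=
  Real.sqrt α * (Real.exp (-α * L) * (4 / (L ^ 2 * α ^ 4) - 1 / (3 * α ^ 2)) +
    L / (3 * α) - 4 / (L ^ 2 * α ^ 4) - 5 / (3 * α ^ 2) + 4 / (L * α ^ 3))

lemma pos_of_deriv (f f' : ℝ → ℝ) (hf : ∀ x, HasDerivAt f (f' x) x) (h0 : f 0 = 0)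
    (hp : ∀ x, 0 < x → 0 < f' x) (x : ℝ) (hx : 0 < x) : 0 < f x := by
  have hm : StrictMonoOn f (Ici 0) := by
    apply strictMonoOn_of_deriv_pos (convex_Ici 0)
    · exact fun y _ => (hf y).continuousAt.continuousWithinAt
    · intro y hy
      rw [interior_Ici] at hy
      rw [(hf y).deriv]
      exact hp y hy
  have := hm (mem_Ici.2 le_rfl) (mem_Ici.2 hx.le) hx
  rwa [h0] at this

lemma k_pos (x : ℝ) (hx : 0 < x) : 0 < -2 + exp x * (x ^ 2 - 2 * x + 2) := by
  refine pos_of_deriv (fun x => -2 + exp x * (x ^ 2 - 2 * x + 2)) (fun x => exp x * x ^ 2)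
    ?_ (by simp) (fun y hy => by positivity) x hx
  intro y
  have h := ((Real.hasDerivAt_exp y).mul ((((hasDerivAt_id y).pow 2).sub
    ((hasDerivAt_id y).const_mul 2)).add_const 2)).const_add (-2)
  refine HasDerivAt.congr_deriv h ?_
  simp
  ring

lemma k_lt (x : ℝ) (hx : 0 < x) :
    0 < exp x * (x ^ 3 / 3) - (-2 + exp x * (x ^ 2 - 2 * x + 2)) := by
  refine pos_of_deriv (fun x => exp x * (x ^ 3 / 3) - (-2 + exp x * (x ^ 2 - 2 * x + 2)))
    (fun x => exp x * (x ^ 3 / 3)) ?_ (by simp) (fun y hy => by positivity) x hx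
  intro y
  have h := ((Real.hasDerivAt_exp y).mul (((hasDerivAt_id y).pow 3).div_const 3)).sub
    (((Real.hasDerivAt_exp y).mul ((((hasDerivAt_id y).pow 2).sub
    ((hasDerivAt_id y).const_mul 2)).add_const 2)).const_add (-2))
  refine HasDerivAt.congr_deriv h ?_
  simp
  ring

lemma hasDeriv_h (y : ℝ) :
    HasDerivAt (fun x => 12 - x ^ 2 + exp x * (x ^ 3 - 5 * x ^ 2 + 12 * x - 12))
      (y * (-2 + exp y * (y ^ 2 - 2 * y + 2))) y := by
  have h := (((hasDerivAt_id y).pow 2).const_sub 12).add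
    ((Real.hasDerivAt_exp y).mul (((((hasDerivAt_id y).pow 3).sub
    (((hasDerivAt_id y).pow 2).const_mul 5)).add
    ((hasDerivAt_id y).const_mul 12)).sub_const 12))
  refine HasDerivAt.congr_deriv h ?_
  simp
  ring

lemma h_pos (x : ℝ) (hx : 0 < x) :
    0 < 12 - x ^ 2 + exp x * (x ^ 3 - 5 * x ^ 2 + 12 * x - 12) :=
  pos_of_deriv _ _ hasDeriv_h (by simp) (fun y hy => mul_pos hy (k_pos y hy)) x hx

lemma h_lt (x : ℝ) (hx : 0 < x) :
    0 < exp x * (x ^ 5 / 15) -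
      (12 - x ^ 2 + exp x * (x ^ 3 - 5 * x ^ 2 + 12 * x - 12)) := by
  refine pos_of_deriv (fun x => exp x * (x ^ 5 / 15) -
      (12 - x ^ 2 + exp x * (x ^ 3 - 5 * x ^ 2 + 12 * x - 12)))
    (fun x => exp x * (x ^ 5 / 15) +
      x * (exp x * (x ^ 3 / 3) - (-2 + exp x * (x ^ 2 - 2 * x + 2)))) ?_ (by simp) ?_ x hx
  · intro y
    have h := ((Real.hasDerivAt_exp y).mul (((hasDerivAt_id y).pow 5).div_const 15)).sub
      (hasDeriv_h y)
    refine HasDerivAt.congr_deriv h ?_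
    simp
    ring
  · intro y hy
    have := mul_pos hy (k_lt y hy)
    positivity

noncomputable def gg (x : ℝ) : ℝ := exp (-x) * (12 - x ^ 2) + (x ^ 3 - 5 * x ^ 2 + 12 * x - 12)

lemma gg_eq (x : ℝ) :
    gg x = exp (-x) * (12 - x ^ 2 + exp x * (x ^ 3 - 5 * x ^ 2 + 12 * x - 12)) := by
  have h : exp (-x) * exp x = 1 := by rw [← exp_add]; simp
  unfold gg
  linear_combination -(x ^ 3 - 5 * x ^ 2 + 12 * x - 12) * h

lemma gg_pos (x : ℝ) (hx : 0 < x) : 0 < gg x := by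
  rw [gg_eq]
  exact mul_pos (exp_pos _) (h_pos x hx)

lemma gg_lt (x : ℝ) (hx : 0 < x) : gg x < x ^ 5 / 15 := by
  have h : exp (-x) * exp x = 1 := by rw [← exp_add]; simp
  have h2 := mul_pos (exp_pos (-x)) (h_lt x hx)
  rw [mul_sub, ← gg_eq, ← mul_assoc, h] at h2
  linarith

lemma gg_le (x : ℝ) (hx : 4 ≤ x) : gg x ≤ x ^ 3 := by
  have h : exp (-x) * (12 - x ^ 2) ≤ 0 :=
    mul_nonpos_of_nonneg_of_nonpos (exp_pos _).le (by nlinarith)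
  unfold gg
  nlinarith

lemma F_eq (L α : ℝ) (hL : 0 < L) (hα : 0 < α) :
    F L α = Real.sqrt α * (gg (α * L) / (3 * L ^ 2 * α ^ 4)) := by
  unfold F gg
  rw [neg_mul]
  congr 1
  field_simp
  ring

theorem stmt15 (L : ℝ) (hL : 0 < L) :
    ContinuousOn (F L) (Ioi 0) ∧
    (∀ α ∈ Ioi (0 : ℝ), 0 < F L α) ∧
    Tendsto (F L) (nhdsWithin 0 (Ioi 0)) (nhds 0) ∧
    Tendsto (F L) atTop (nhds 0) ∧
    ∃ αstar ∈ Ioi (0 : ℝ), ∀ α ∈ Ioi (0 : ℝ), F L α ≤ F L αstar := by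
  have hc : ContinuousOn (F L) (Ioi 0) := by
    intro α hα
    have hα : 0 < α := hα
    apply ContinuousAt.continuousWithinAt
    unfold F
    have h1 : L ^ 2 * α ^ 4 ≠ 0 := by positivity
    have h2 : 3 * α ^ 2 ≠ 0 := by positivity
    have h3 : 3 * α ≠ 0 := by positivity
    have h4 : L * α ^ 3 ≠ 0 := by positivity
    fun_prop (disch := assumption)
  have hp : ∀ α ∈ Ioi (0 : ℝ), 0 < F L α := by
    intro α hα
    have hα : 0 < α := hα
    rw [F_eq L α hL hα]
    have := gg_pos (α * L) (by positivity)
    positivity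
  have h0 : Tendsto (F L) (nhdsWithin 0 (Ioi 0)) (nhds 0) := by
    have ht : Tendsto (fun α : ℝ => Real.sqrt α * (L ^ 3 * α / 45))
        (nhdsWithin 0 (Ioi 0)) (nhds 0) := by
      have : ContinuousAt (fun α : ℝ => Real.sqrt α * (L ^ 3 * α / 45)) 0 := by fun_prop
      have h := this.tendsto
      simp only [Real.sqrt_zero, zero_mul] at h
      exact h.mono_left nhdsWithin_le_nhds
    refine tendsto_of_tendsto_of_tendsto_of_le_of_le' tendsto_const_nhds ht ?_ ?_
    · filter_upwards [self_mem_nhdsWithin] with α hα using (hp α hα).le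
    · filter_upwards [self_mem_nhdsWithin] with α hα
      have hα : 0 < α := hα
      rw [F_eq L α hL hα]
      refine mul_le_mul_of_nonneg_left ?_ (Real.sqrt_nonneg _)
      rw [div_le_iff₀ (by positivity)]
      have := gg_lt (α * L) (by positivity)
      refine this.le.trans (le_of_eq ?_)
      ring
  have hi : Tendsto (F L) atTop (nhds 0) := by
    have ht : Tendsto (fun α : ℝ => (L / 3) / Real.sqrt α) atTop (nhds 0) :=
      tendsto_const_nhds.div_atTop Real.tendsto_sqrt_atTop
    refine tendsto_of_tendsto_of_tendsto_of_le_of_le' tendsto_const_nhds ht ?_ ?_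
    · filter_upwards [eventually_gt_atTop 0] with α hα using (hp α hα).le
    · filter_upwards [eventually_gt_atTop 0, eventually_ge_atTop (4 / L)] with α hα h4
      rw [F_eq L α hL hα]
      have h5 := gg_le (α * L) ((div_le_iff₀ hL).1 h4)
      have hs : 0 < Real.sqrt α := Real.sqrt_pos.2 hα
      have h6 : gg (α * L) / (3 * L ^ 2 * α ^ 4) ≤ (L / 3) / α := by
        rw [div_le_div_iff₀ (by positivity) hα]
        calc gg (α * L) * α ≤ (α * L) ^ 3 * α := mul_le_mul_of_nonneg_right h5 hα.le
          _ = _ := by ring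
      refine (mul_le_mul_of_nonneg_left h6 hs.le).trans (le_of_eq ?_)
      have h7 := Real.mul_self_sqrt hα.le
      rw [mul_div_assoc', div_eq_div_iff hα.ne' hs.ne']
      linear_combination (L / 3) * h7
  refine ⟨hc, hp, h0, hi, ?_⟩
  have h1 := hp 1 (mem_Ioi.2 one_pos)
  have e0 := h0.eventually (gt_mem_nhds h1)
  obtain ⟨δ, hδ, hδ'⟩ := (mem_nhdsGT_iff_exists_Ioo_subset).1 e0
  obtain ⟨M, hM⟩ := eventually_atTop.1 (hi.eventually (gt_mem_nhds h1))
  have hδ : 0 < δ := hδ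
  have hm : 0 < min δ 1 := lt_min hδ one_pos
  have hmem : (1 : ℝ) ∈ Icc (min δ 1) (max M 1) := ⟨min_le_right _ _, le_max_right _ _⟩
  obtain ⟨a, ha, hmax⟩ := isCompact_Icc.exists_isMaxOn ⟨1, hmem⟩
    (hc.mono (fun x (hx : x ∈ Icc (min δ 1) (max M 1)) => lt_of_lt_of_le hm hx.1))
  have ha1 : F L 1 ≤ F L a := hmax hmem
  refine ⟨a, lt_of_lt_of_le hm ha.1, fun α hα => ?_⟩
  rcases lt_or_ge α (min δ 1) with h | h
  · have : F L α < F L 1 := hδ' ⟨hα, h.trans_le (min_le_left _ _)⟩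
    exact this.le.trans ha1
  · rcases le_or_gt α (max M 1) with h' | h'
    · exact hmax ⟨h, h'⟩
    · exact (hM α ((le_max_left _ _).trans h'.le)).le.trans ha1
end
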